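/- Let K belong to the class R and let t and t₁ be the two singular vertices of K. If d(t) = 7, then tt₁ is an edge of K with d(tt₁) = 6 and d(t₁) ≥ 8; otherwise d(t) ≥ 8 and d(t₁) ≥ 8. -/

import Mathlib

/-- An abstract simplicial complex on vertex set `ℕ`: a finite, downward closed
collection of nonempty finite sets of vertices. -/
structure SComplex where
  faces : Finset (Finset ℕ)
  not_empty_mem : ∅ ∉ faces
  down_closed : ∀ s ∈ faces, ∀ t ⊆ s, t ≠ ∅ → t ∈ faces

namespace SComplex

/-- The set of vertices of the complex. -/
def vertexSet (K : SComplex) : Finset ℕ := K.faces.sup id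

/-- `fnum K i` is the number of `i`-dimensional faces of `K`. -/
def fnum (K : SComplex) (i : ℕ) : ℕ := (K.faces.filter fun s => s.card = i + 1).card

/-- `g₂` for a 3-dimensional complex: `f₁ - 4 f₀ + 10`. -/
def g2 (K : SComplex) : ℤ := (K.fnum 1 : ℤ) - 4 * (K.fnum 0 : ℤ) + 10

/-- `g₂` for a 2-dimensional complex: `f₁ - 3 f₀ + 6`. -/
def g2surf (K : SComplex) : ℤ := (K.fnum 1 : ℤ) - 3 * (K.fnum 0 : ℤ) + 6

/-- Euler characteristic of a (2-dimensional) complex. -/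
def euler (K : SComplex) : ℤ := (K.fnum 0 : ℤ) - (K.fnum 1 : ℤ) + (K.fnum 2 : ℤ)

/-- The link of a face `σ`. -/
def lk (K : SComplex) (σ : Finset ℕ) : SComplex where
  faces := K.faces.filter fun γ => γ ∩ σ = ∅ ∧ γ ∪ σ ∈ K.faces
  not_empty_mem := fun h => K.not_empty_mem (Finset.mem_filter.mp h).1
  down_closed := by
    intro s hs t hts ht
    rw [Finset.mem_filter] at hs ⊢
    refine ⟨K.down_closed s hs.1 t hts ht, ?_, ?_⟩
    · have h1 : t ∩ σ ⊆ s ∩ σ := Finset.inter_subset_inter hts (Finset.Subset.refl σ)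
      rw [hs.2.1] at h1
      exact Finset.subset_empty.mp h1
    · refine K.down_closed (s ∪ σ) hs.2.2 (t ∪ σ)
        (Finset.union_subset_union hts (Finset.Subset.refl σ)) ?_
      intro hc
      exact ht (Finset.union_eq_empty.mp hc).1

/-- The (closed) star of a face `σ`. -/
def st (K : SComplex) (σ : Finset ℕ) : SComplex where
  faces := K.faces.filter fun α => α ∪ σ ∈ K.faces
  not_empty_mem := fun h => K.not_empty_mem (Finset.mem_filter.mp h).1
  down_closed := by
    intro s hs t hts ht
    rw [Finset.mem_filter] at hs ⊢
    refine ⟨K.down_closed s hs.1 t hts ht, ?_⟩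
    refine K.down_closed (s ∪ σ) hs.2 (t ∪ σ)
      (Finset.union_subset_union hts (Finset.Subset.refl σ)) ?_
    intro hc
    exact ht (Finset.union_eq_empty.mp hc).1

/-- A facet is a maximal face. -/
def IsFacet (K : SComplex) (s : Finset ℕ) : Prop :=
  s ∈ K.faces ∧ ∀ t ∈ K.faces, s ⊆ t → s = t

/-- A pure `d`-dimensional complex: all facets have `d+1` vertices. -/
def IsPure (K : SComplex) (d : ℕ) : Prop :=
  K.faces.Nonempty ∧ ∀ s, K.IsFacet s → s.card = d + 1

/-- Two facets are adjacent if they share a codimension-one face. -/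
def FacetAdj (K : SComplex) (s t : Finset ℕ) : Prop :=
  K.IsFacet s ∧ K.IsFacet t ∧ (s ∩ t).card + 1 = s.card

/-- Strong connectedness: any two facets are joined by a chain of facets, consecutive
ones sharing a codimension-one face. -/
def StronglyConnected (K : SComplex) : Prop :=
  ∀ s t, K.IsFacet s → K.IsFacet t → Relation.ReflTransGen K.FacetAdj s t

/-- Two vertices are adjacent if they span an edge. -/
def VertAdj (K : SComplex) (u v : ℕ) : Prop := ({u, v} : Finset ℕ) ∈ K.faces

/-- Connectedness of a complex (via its 1-skeleton). -/
def Conn (K : SComplex) : Prop :=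
  K.faces.Nonempty ∧
    ∀ u v, {u} ∈ K.faces → {v} ∈ K.faces → Relation.ReflTransGen K.VertAdj u v

/-- A normal `d`-pseudomanifold: pure, strongly connected, every `(d-1)`-face is in
exactly two facets, and links of faces of dimension at most `d-2` are connected. -/
def IsNormalPseudomanifold (K : SComplex) (d : ℕ) : Prop :=
  K.IsPure d ∧ K.StronglyConnected ∧
    (∀ s ∈ K.faces, s.card = d →
      (K.faces.filter fun F => F.card = d + 1 ∧ s ⊆ F).card = 2) ∧
    (∀ s ∈ K.faces, s.card ≤ d - 1 → (K.lk s).Conn)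

/-- The geometric realization `|K|`, as a subspace of `ℕ → ℝ`. -/
def realSpace (K : SComplex) : Set (ℕ → ℝ) :=
  {w | (∀ v, 0 ≤ w v) ∧ ∃ s ∈ K.faces, (∀ v, w v ≠ 0 → v ∈ s) ∧ ∑ v ∈ s, w v = 1}

/-- The link of the vertex `v` triangulates the `(d-1)`-sphere. -/
def HasSphereLink (K : SComplex) (d : ℕ) (v : ℕ) : Prop :=
  Nonempty (↥((K.lk {v}).realSpace) ≃ₜ
    ↥(Metric.sphere (0 : EuclideanSpace ℝ (Fin d)) 1))

/-- A singular vertex of a normal 3-pseudomanifold: its link is not a 2-sphere. -/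
def IsSingular (K : SComplex) (v : ℕ) : Prop :=
  {v} ∈ K.faces ∧ ¬ K.HasSphereLink 3 v

/-- `d(σ)`: the number of vertices of the link of `σ`. -/
def deg (K : SComplex) (σ : Finset ℕ) : ℕ := (K.lk σ).fnum 0

/-- The boundary complex of the simplex on vertex set `s`: all nonempty proper subsets. -/
def properFaces (s : Finset ℕ) : Finset (Finset ℕ) :=
  s.powerset.filter fun t => t ≠ ∅ ∧ t ≠ s

/-- All nonempty faces of the simplex on vertex set `s`. -/
def simplexFaces (s : Finset ℕ) : Finset (Finset ℕ) :=
  s.powerset.filter fun t => t ≠ ∅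

/-- Operation (A): a bistellar 2-move on an edge `uv` with `lk(uv) = ∂(abc)`, `abc ∉ K`. -/
def BistellarTwoMove (K K' : SComplex) : Prop :=
  ∃ u v a b c : ℕ,
    ({u, v} : Finset ℕ) ∈ K.faces ∧ u ≠ v ∧
    ({a, b, c} : Finset ℕ).card = 3 ∧
    u ∉ ({a, b, c} : Finset ℕ) ∧ v ∉ ({a, b, c} : Finset ℕ) ∧
    (K.lk {u, v}).faces = properFaces {a, b, c} ∧
    ({a, b, c} : Finset ℕ) ∉ K.faces ∧
    K'.faces = ((K.faces.filter fun α => ¬ ({u, v} : Finset ℕ) ⊆ α) ∪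
      simplexFaces (insert u {a, b, c})) ∪ simplexFaces (insert v {a, b, c})

/-- The faces of the boundary complex of a pure `d`-dimensional complex with face set `F`:
faces contained in some `(d-1)`-face lying in exactly one facet. -/
def bdryFaces (F : Finset (Finset ℕ)) (d : ℕ) : Finset (Finset ℕ) :=
  F.filter fun s => ∃ r ∈ F, s ⊆ r ∧ r.card = d ∧
    (F.filter fun t => t.card = d + 1 ∧ r ⊆ t).card = 1

/-- The faces of the cone with apex `w` over the complex with face set `F`. -/
def coneFaces (w : ℕ) (F : Finset (Finset ℕ)) : Finset (Finset ℕ) :=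
  (F ∪ F.image (insert w)) ∪ {{w}}

/-- `K₁` is obtained from the normal `d`-pseudomanifold `K` by contracting the
edge `uv` (satisfying the link condition): delete all faces containing `u` or `v`
and cone off the boundary of the result with a new vertex `w`. -/
def EdgeContractionAt (d : ℕ) (K : SComplex) (u v : ℕ) (K₁ : SComplex) : Prop :=
  ({u, v} : Finset ℕ) ∈ K.faces ∧ u ≠ v ∧
  (K.lk {u}).faces ∩ (K.lk {v}).faces = (K.lk {u, v}).faces ∧
  ∃ w, w ∉ K.vertexSet ∧
    K₁.faces = (K.faces.filter fun α => u ∉ α ∧ v ∉ α) ∪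
      coneFaces w (bdryFaces (K.faces.filter fun α => u ∉ α ∧ v ∉ α) d)

/-- Operation (B): an edge contraction in a 3-dimensional complex. -/
def EdgeContraction (K K₁ : SComplex) : Prop := ∃ u v, EdgeContractionAt 3 K u v K₁

/-- The class `R`: normal 3-pseudomanifolds with one or two singular vertices such that
(i) if `K` contains the boundary of a 3-simplex then it contains the 3-simplex and
(ii) no normal 3-pseudomanifold with smaller `g₂` is obtained from `K` by a
bistellar 2-move, an edge contraction, an edge expansion followed by a bistellar
2-move, or an edge expansion followed by an edge contraction. -/
def InClassR (K : SComplex) : Prop :=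
  K.IsNormalPseudomanifold 3 ∧
  1 ≤ {v | K.IsSingular v}.ncard ∧ {v | K.IsSingular v}.ncard ≤ 2 ∧
  (∀ s : Finset ℕ, s.card = 4 → (∀ t ∈ properFaces s, t ∈ K.faces) → s ∈ K.faces) ∧
  (∀ K' : SComplex, K'.IsNormalPseudomanifold 3 →
    (BistellarTwoMove K K' ∨ EdgeContraction K K' ∨
      (∃ M, EdgeContraction M K ∧ BistellarTwoMove M K') ∨
      (∃ M, EdgeContraction M K ∧ EdgeContraction M K')) →
    K.g2 ≤ K'.g2)




theorem rtg_map {r p : ℕ → ℕ → Prop} (f : ℕ → ℕ)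
    (h : ∀ a b, r a b → Relation.ReflTransGen p (f a) (f b)) {a b : ℕ}
    (hab : Relation.ReflTransGen r a b) : Relation.ReflTransGen p (f a) (f b) := by
  induction hab with
  | refl => exact Relation.ReflTransGen.refl
  | tail _ h2 ih => exact ih.trans (h _ _ h2)

theorem rtg_mono {r p : ℕ → ℕ → Prop} (h : ∀ a b, r a b → p a b) {a b : ℕ}
    (hab : Relation.ReflTransGen r a b) : Relation.ReflTransGen p a b :=
  rtg_map id (fun a b hh => Relation.ReflTransGen.single (h a b hh)) hab

theorem rtg_symm {r : ℕ → ℕ → Prop} (h : ∀ a b, r a b → r b a) {a b : ℕ}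
    (hab : Relation.ReflTransGen r a b) : Relation.ReflTransGen r b a := by
  induction hab with
  | refl => exact Relation.ReflTransGen.refl
  | tail _ h2 ih => exact Relation.ReflTransGen.head (h _ _ h2) ih

/-- vertex of the link -/
def LV (K : SComplex) (σ : Finset ℕ) (y : ℕ) : Prop := y ∉ σ ∧ insert y σ ∈ K.faces

/-- adjacency in the link -/
def LA (K : SComplex) (σ : Finset ℕ) (y z : ℕ) : Prop :=
  y ∉ σ ∧ z ∉ σ ∧ insert y (insert z σ) ∈ K.faces

/-- Workable form of normal 3-pseudomanifold. -/
structure NP (K : SComplex) : Prop where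
  ne : K.faces.Nonempty
  ext : ∀ s ∈ K.faces, ∃ F ∈ K.faces, s ⊆ F ∧ F.card = 4
  card : ∀ s ∈ K.faces, s.card ≤ 4
  two : ∀ s ∈ K.faces, s.card = 3 → ∃ y z, y ≠ z ∧ ∀ x, K.LV s x ↔ (x = y ∨ x = z)
  conn : ∀ s : Finset ℕ, s.card ≤ 2 → (s = ∅ ∨ s ∈ K.faces) → ∀ y z, K.LV s y → K.LV s z →
    Relation.ReflTransGen (K.LA s) y z

theorem LA.symm {K : SComplex} {σ y z} (h : K.LA σ y z) : K.LA σ z y := by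
  refine ⟨h.2.1, h.1, ?_⟩
  rw [Finset.insert_comm]; exact h.2.2

theorem down {K : SComplex} {s t : Finset ℕ} (h : s ∈ K.faces) (hts : t ⊆ s) (ht : t.Nonempty) :
    t ∈ K.faces := K.down_closed s h t hts ht.ne_empty

theorem nonempty_of_mem {K : SComplex} {s : Finset ℕ} (h : s ∈ K.faces) : s.Nonempty := by
  rw [Finset.nonempty_iff_ne_empty]; rintro rfl; exact K.not_empty_mem h

theorem LA.left {K : SComplex} {σ y z} (h : K.LA σ y z) : K.LV σ y :=
  ⟨h.1, down h.2.2 (by intro x; simp; tauto) (by simp)⟩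

theorem LA.right {K : SComplex} {σ y z} (h : K.LA σ y z) : K.LV σ z := h.symm.left

theorem mem_lk {K : SComplex} {σ γ : Finset ℕ} :
    γ ∈ (K.lk σ).faces ↔ γ.Nonempty ∧ Disjoint γ σ ∧ γ ∪ σ ∈ K.faces := by
  simp only [lk, Finset.mem_filter, Finset.disjoint_iff_inter_eq_empty]
  constructor
  · rintro ⟨a, b, c⟩; exact ⟨nonempty_of_mem a, b, c⟩
  · rintro ⟨a, b, c⟩; exact ⟨down c Finset.subset_union_left a, b, c⟩

theorem singleton_mem_lk {K : SComplex} {σ : Finset ℕ} {y : ℕ} :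
    {y} ∈ (K.lk σ).faces ↔ K.LV σ y := by
  rw [mem_lk, LV]; simp [Finset.singleton_union]

theorem pair_mem_lk {K : SComplex} {σ : Finset ℕ} {y z : ℕ} :
    (K.lk σ).VertAdj y z ↔ K.LA σ y z := by
  rw [VertAdj, mem_lk, LA]
  simp [and_assoc]

theorem mem_vertexSet {K : SComplex} {y : ℕ} : y ∈ K.vertexSet ↔ {y} ∈ K.faces := by
  simp only [vertexSet, Finset.mem_sup, id]
  constructor
  · rintro ⟨s, hs, hy⟩; exact down hs (by simpa using hy) (by simp)
  · intro h; exact ⟨_, h, by simp⟩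

theorem LV.mem_vertexSet {K : SComplex} {σ : Finset ℕ} {y : ℕ} (h : K.LV σ y) :
    y ∈ K.vertexSet := by
  rw [SComplex.mem_vertexSet]; exact down h.2 (by simp) (by simp)

theorem mem_vertexSet_of {K : SComplex} {s : Finset ℕ} (h : s ∈ K.faces) {y : ℕ} (hy : y ∈ s) :
    y ∈ K.vertexSet := by
  rw [SComplex.mem_vertexSet]; exact down h (by simpa using hy) (by simp)

open Classical in
/-- neighbours of a face -/
noncomputable def nb (K : SComplex) (σ : Finset ℕ) : Finset ℕ := K.vertexSet.filter (K.LV σ)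

theorem mem_nb {K : SComplex} {σ : Finset ℕ} {y : ℕ} : y ∈ K.nb σ ↔ K.LV σ y := by
  classical
  simp only [nb, Finset.mem_filter]
  exact ⟨fun h => h.2, fun h => ⟨h.mem_vertexSet, h⟩⟩

theorem deg_eq {K : SComplex} {σ : Finset ℕ} : K.deg σ = (K.nb σ).card := by
  classical
  rw [deg, fnum]
  symm
  apply Finset.card_bij (fun y _ => {y})
  · intro a ha
    simp only [Finset.mem_filter, singleton_mem_lk, Finset.card_singleton, and_true]
    simpa using ha |> mem_nb.1
  · intro a _ b _ h; simpa using h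
  · intro b hb
    rw [Finset.mem_filter] at hb
    obtain ⟨a, rfl⟩ := Finset.card_eq_one.1 hb.2
    exact ⟨a, mem_nb.2 (singleton_mem_lk.1 hb.1), rfl⟩

theorem exists_facet {K : SComplex} {s : Finset ℕ} (hs : s ∈ K.faces) :
    ∃ F, K.IsFacet F ∧ s ⊆ F := by
  obtain ⟨F, hsF, hF⟩ := K.faces.exists_le_maximal hs
  exact ⟨F, ⟨hF.1, fun t ht hFt => le_antisymm hFt (hF.2 ht hFt)⟩, hsF⟩

theorem two_of_card {K : SComplex} {s : Finset ℕ} (h3 : s.card = 3)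
    (h : (K.faces.filter fun F => F.card = 3 + 1 ∧ s ⊆ F).card = 2) :
    ∃ y z, y ≠ z ∧ ∀ x, K.LV s x ↔ (x = y ∨ x = z) := by
  have key : (K.nb s).card = 2 := by
    rw [← h]
    apply Finset.card_bij (fun y _ => insert y s)
    · intro a ha
      rw [mem_nb] at ha
      simp only [Finset.mem_filter]
      exact ⟨ha.2, by rw [Finset.card_insert_of_notMem ha.1, h3], Finset.subset_insert _ _⟩
    · intro a ha b hb hab
      rw [mem_nb] at ha hb
      have : a ∈ insert b s := by rw [← hab]; simp
      rcases Finset.mem_insert.1 this with h | h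
      · exact h
      · exact absurd h ha.1
    · intro F hF
      simp only [Finset.mem_filter] at hF
      obtain ⟨hF, h4, hs⟩ := hF
      have : ∃ a, a ∉ s ∧ F = insert a s := by
        obtain ⟨a, ha⟩ := Finset.card_eq_one.1 (show (F \ s).card = 1 by
          rw [Finset.card_sdiff_of_subset hs]; omega)
        have ha' : a ∈ F \ s := by rw [ha]; simp
        refine ⟨a, (Finset.mem_sdiff.1 ha').2, ?_⟩
        rw [← Finset.sdiff_union_of_subset hs, ha]; rfl
      obtain ⟨a, ha, rfl⟩ := this
      exact ⟨a, mem_nb.2 ⟨ha, hF⟩, rfl⟩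
  obtain ⟨y, z, hyz, he⟩ := Finset.card_eq_two.1 key
  refine ⟨y, z, hyz, fun x => ?_⟩
  rw [← mem_nb, he]; simp

theorem card_of_two {K : SComplex} {s : Finset ℕ} (h3 : s.card = 3)
    (h : ∃ y z, y ≠ z ∧ ∀ x, K.LV s x ↔ (x = y ∨ x = z)) :
    (K.faces.filter fun F => F.card = 3 + 1 ∧ s ⊆ F).card = 2 := by
  obtain ⟨y, z, hyz, h⟩ := h
  have hy := (h y).2 (Or.inl rfl)
  have hz := (h z).2 (Or.inr rfl)
  rw [Finset.card_eq_two]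
  refine ⟨insert y s, insert z s, ?_, ?_⟩
  · intro he
    have : y ∈ insert z s := by rw [← he]; simp
    rcases Finset.mem_insert.1 this with h | h
    · exact hyz h
    · exact hy.1 h
  · ext F
    simp only [Finset.mem_filter, Finset.mem_insert, Finset.mem_singleton]
    constructor
    · rintro ⟨hF, h4, hs⟩
      have : ∃ a, a ∉ s ∧ F = insert a s := by
        obtain ⟨a, ha⟩ := Finset.card_eq_one.1 (show (F \ s).card = 1 by
          rw [Finset.card_sdiff_of_subset hs]; omega)
        have ha' : a ∈ F \ s := by rw [ha]; simp
        refine ⟨a, (Finset.mem_sdiff.1 ha').2, ?_⟩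
        rw [← Finset.sdiff_union_of_subset hs, ha]; rfl
      obtain ⟨a, ha, rfl⟩ := this
      rcases (h a).1 ⟨ha, hF⟩ with rfl | rfl <;> simp
    · rintro (rfl | rfl)
      · exact ⟨hy.2, by rw [Finset.card_insert_of_notMem hy.1, h3], Finset.subset_insert _ _⟩
      · exact ⟨hz.2, by rw [Finset.card_insert_of_notMem hz.1, h3], Finset.subset_insert _ _⟩

theorem IsNormalPseudomanifold.np {K : SComplex} (h : K.IsNormalPseudomanifold 3) : NP K := by
  obtain ⟨⟨hne, hp⟩, hsc, h2, hc⟩ := h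
  refine ⟨hne, ?_, ?_, ?_, ?_⟩
  · intro s hs
    obtain ⟨F, hF, hsF⟩ := exists_facet hs
    exact ⟨F, hF.1, hsF, hp F hF⟩
  · intro s hs
    obtain ⟨F, hF, hsF⟩ := exists_facet hs
    have := hp F hF
    have := Finset.card_le_card hsF
    omega
  · intro s hs h3
    exact two_of_card h3 (h2 s hs h3)
  · intro s hs hs' y z hy hz
    rcases hs' with rfl | hs'
    · have key : ∀ F, K.IsFacet F → ∀ F', Relation.ReflTransGen K.FacetAdj F F' →
          ∀ y ∈ F, ∀ z ∈ F', Relation.ReflTransGen (K.LA ∅) y z := by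
        intro F hF F' hFF'
        induction hFF' with
        | refl =>
          intro y hy z hz
          apply Relation.ReflTransGen.single
          refine ⟨by simp, by simp, down hF.1 ?_ (by simp)⟩
          intro a; simp; rintro (rfl | rfl) <;> assumption
        | tail _ hadj ih =>
          intro y hy z hz
          obtain ⟨ha, hb, hcd⟩ := hadj
          have h4 := hp _ ha
          obtain ⟨x, hx⟩ := Finset.card_pos.1 (show 0 < (_ ∩ _ : Finset ℕ).card by
            rw [h4] at hcd; rw [show (_ : Finset ℕ).card = 3 from Nat.succ.inj hcd]; norm_num)
          rw [Finset.mem_inter] at hx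
          refine (ih y hy x hx.1).tail ?_
          refine ⟨by simp, by simp, down hb.1 ?_ (by simp)⟩
          intro a; simp; rintro (rfl | rfl)
          · exact hx.2
          · assumption
      obtain ⟨F, hF, hyF⟩ := exists_facet hy.2
      obtain ⟨F', hF', hzF⟩ := exists_facet hz.2
      exact key F hF F' (hsc F F' hF hF') y (hyF (by simp)) z (hzF (by simp))
    · have := (hc s hs' hs).2 y z (singleton_mem_lk.2 hy) (singleton_mem_lk.2 hz)
      exact rtg_mono (fun a b => pair_mem_lk.1) this

theorem NP.facet_card {K : SComplex} (h : NP K) {s : Finset ℕ} (hs : K.IsFacet s) :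
    s.card = 4 := by
  obtain ⟨F, hF, hsF, h4⟩ := h.ext s hs.1
  rw [hs.2 F hF hsF]; exact h4

theorem NP.strong {K : SComplex} (h : NP K) : ∀ k, k ≤ 3 → ∀ σ : Finset ℕ, σ.card + k = 3 →
    ∀ F F', K.IsFacet F → K.IsFacet F' → σ ⊆ F → σ ⊆ F' →
    Relation.ReflTransGen K.FacetAdj F F' := by
  intro k
  induction k with
  | zero =>
    intro _ σ hσ F F' hF hF' hs hs'
    by_cases he : F = F'
    · rw [he]
    · apply Relation.ReflTransGen.single
      refine ⟨hF, hF', ?_⟩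
      have h1 := h.facet_card hF
      have h2 := h.facet_card hF'
      have h3 : (F ∩ F').card ≥ 3 := by
        have := Finset.card_le_card (Finset.subset_inter hs hs'); omega
      have h4 : (F ∩ F').card < 4 := by
        rw [← h1]; apply Finset.card_lt_card
        refine ⟨Finset.inter_subset_left, fun hh => he ?_⟩
        apply Finset.eq_of_subset_of_card_le
        · exact fun x hx => (Finset.mem_inter.1 (hh hx)).2
        · omega
      omega
  | succ k ih =>
    intro hk σ hσ F F' hF hF' hs hs'
    have h1 := h.facet_card hF
    have h2 := h.facet_card hF'
    have ex : ∀ G : Finset ℕ, G.card = 4 → σ ⊆ G → ∃ y ∈ G, y ∉ σ := by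
      intro G hG hsG
      by_contra hcon
      push Not at hcon
      have := Finset.card_le_card (show G ⊆ σ from hcon)
      omega
    obtain ⟨y, hyF, hyσ⟩ := ex F h1 hs
    obtain ⟨z, hzF, hzσ⟩ := ex F' h2 hs'
    have lvy : K.LV σ y := ⟨hyσ, down hF.1 (by
      intro a; simp; rintro (rfl | ha); exacts [hyF, hs ha]) (by simp)⟩
    have lvz : K.LV σ z := ⟨hzσ, down hF'.1 (by
      intro a; simp; rintro (rfl | ha); exacts [hzF, hs' ha]) (by simp)⟩
    have hσ' : σ = ∅ ∨ σ ∈ K.faces := by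
      by_cases h0 : σ = ∅
      · exact Or.inl h0
      · exact Or.inr (K.down_closed _ hF.1 _ hs h0)
    have path := h.conn σ (by omega) hσ' y z lvy lvz
    clear lvz hσ'
    induction path generalizing F' with
    | refl =>
      refine ih (by omega) (insert y σ) ?_ F F' hF hF' ?_ ?_
      · rw [Finset.card_insert_of_notMem hyσ]; omega
      · intro a; simp; rintro (rfl | ha); exacts [hyF, hs ha]
      · intro a; simp; rintro (rfl | ha); exacts [hzF, hs' ha]
    | tail _ hadj ih2 =>
      rename_i b c _
      obtain ⟨G, hG, hsG⟩ := exists_facet hadj.2.2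
      have hbG : b ∈ G := hsG (by simp)
      have hcG : c ∈ G := hsG (by simp)
      have hσG : σ ⊆ G := fun a ha => hsG (by simp [ha])
      refine (ih2 G hG hσG (h.facet_card hG) hbG hadj.1).trans ?_
      refine ih (by omega) (insert c σ) ?_ G F' hG hF' ?_ ?_
      · rw [Finset.card_insert_of_notMem hadj.2.1]; omega
      · intro a; simp; rintro (rfl | ha); exacts [hcG, hσG ha]
      · intro a; simp; rintro (rfl | ha); exacts [hzF, hs' ha]

theorem NP.inp {K : SComplex} (h : NP K) : K.IsNormalPseudomanifold 3 := by
  refine ⟨⟨h.ne, fun s hs => h.facet_card hs⟩, ?_, ?_, ?_⟩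
  · intro s t hs ht
    exact h.strong 3 le_rfl ∅ (by simp) s t hs ht (by simp) (by simp)
  · intro s hs h3
    exact card_of_two h3 (h.two s hs h3)
  · intro s hs h2
    refine ⟨?_, ?_⟩
    · obtain ⟨F, hF, hsF, h4⟩ := h.ext s hs
      have : ∃ y ∈ F, y ∉ s := by
        by_contra hcon
        push Not at hcon
        have := Finset.card_le_card (show F ⊆ s from hcon)
        omega
      obtain ⟨y, hy, hys⟩ := this
      refine ⟨{y}, singleton_mem_lk.2 ⟨hys, down hF ?_ (by simp)⟩⟩
      intro a; simp; rintro (rfl | ha); exacts [hy, hsF ha]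
    · intro u v hu hv
      have := h.conn s (by omega) (Or.inr hs) u v (singleton_mem_lk.1 hu) (singleton_mem_lk.1 hv)
      exact rtg_mono (fun a b => pair_mem_lk.2) this



theorem LA_iff {K : SComplex} {e : Finset ℕ} {a z : ℕ} (ha : a ∉ e) :
    (K.LA e a z ∧ z ≠ a) ↔ K.LV (insert a e) z := by
  unfold LA LV
  rw [Finset.insert_comm a z]
  simp only [Finset.mem_insert, not_or]
  tauto

theorem NP.two' {K : SComplex} (h : NP K) {e : Finset ℕ} (he : e.card = 2) {a z : ℕ}
    (hLA : K.LA e a z) (haz : z ≠ a) :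
    ∃ z', z' ≠ z ∧ z' ≠ a ∧ K.LA e a z' ∧ ∀ x, K.LA e a x → x ≠ a → x = z ∨ x = z' := by
  have hz := (LA_iff hLA.1).1 ⟨hLA, haz⟩
  obtain ⟨p, q, hpq, hh⟩ := h.two (insert a e) hLA.left.2
    (by rw [Finset.card_insert_of_notMem hLA.1, he])
  have hp := (LA_iff hLA.1).2 ((hh p).2 (Or.inl rfl))
  have hq := (LA_iff hLA.1).2 ((hh q).2 (Or.inr rfl))
  have hx : ∀ x, K.LA e a x → x ≠ a → x = p ∨ x = q := fun x h1 h2 =>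
    (hh x).1 ((LA_iff hLA.1).1 ⟨h1, h2⟩)
  rcases (hh z).1 hz with rfl | rfl
  · exact ⟨q, hpq.symm, hq.2, hq.1, hx⟩
  · exact ⟨p, hpq, hp.2, hp.1, fun x h1 h2 => (hx x h1 h2).symm⟩

theorem NP.two'' {K : SComplex} (h : NP K) {e : Finset ℕ} (he : e.card = 2) {a : ℕ}
    (ha : K.LV e a) :
    ∃ z z', z ≠ z' ∧ z ≠ a ∧ z' ≠ a ∧ K.LA e a z ∧ K.LA e a z' ∧
      ∀ x, K.LA e a x → x ≠ a → x = z ∨ x = z' := by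
  obtain ⟨p, q, hpq, hh⟩ := h.two (insert a e) ha.2
    (by rw [Finset.card_insert_of_notMem ha.1, he])
  have hp := (LA_iff ha.1).2 ((hh p).2 (Or.inl rfl))
  have hq := (LA_iff ha.1).2 ((hh q).2 (Or.inr rfl))
  exact ⟨p, q, hpq, hp.2, hq.2, hp.1, hq.1, fun x h1 h2 => (hh x).1 ((LA_iff ha.1).1 ⟨h1, h2⟩)⟩

theorem NP.cycle_minus {K : SComplex} (h : NP K) {e : Finset ℕ} (he : e.card = 2)
    {v y y' : ℕ} (hy : K.LA e v y) (hy' : K.LA e v y') (hvy : y ≠ v) (hvy' : y' ≠ v)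
    (hyy : y ≠ y') :
    Relation.ReflTransGen (fun a b => K.LA e a b ∧ a ≠ v ∧ b ≠ v) y y' := by
  classical
  by_contra hcon
  set R : ℕ → ℕ → Prop := fun a b => K.LA e a b ∧ a ≠ v ∧ b ≠ v with hR
  have hRs : ∀ a b, R a b → R b a := fun a b hab => ⟨hab.1.symm, hab.2.2, hab.2.1⟩
  have hv : ∀ x, K.LA e v x → x ≠ v → x = y ∨ x = y' := by
    obtain ⟨z, h1, h2, h3, h4⟩ := h.two' he hy hvy
    have : y' = z := by
      rcases h4 y' hy' hvy' with h | h
      · exact absurd h.symm hyy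
      · exact h
    rw [this]; exact h4
  have hreach : ∀ a, Relation.ReflTransGen R y a → K.LV e a ∧ a ≠ v := by
    intro a ha
    cases ha with
    | refl => exact ⟨hy.right, hvy⟩
    | tail _ h2 => exact ⟨h2.1.right, h2.2.2⟩
  let V := {x // x ∈ K.vertexSet}
  let H : SimpleGraph V :=
    { Adj := fun a b => a ≠ b ∧ R a b ∧ Relation.ReflTransGen R y a ∧ Relation.ReflTransGen R y b
      symm := ⟨fun a b hab => ⟨hab.1.symm, hRs _ _ hab.2.1, hab.2.2.2, hab.2.2.1⟩⟩
      loopless := ⟨fun a ha => ha.1 rfl⟩ }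
  have hadj : ∀ a b : V, H.Adj a b ↔ (a ≠ b ∧ R a b ∧ Relation.ReflTransGen R y a ∧
    Relation.ReflTransGen R y b) := fun a b => Iff.rfl
  let y0 : V := ⟨y, hy.right.mem_vertexSet⟩
  have hodd : Odd (H.degree y0) := by
    obtain ⟨z, h1, h2, h3, h4⟩ := h.two' he hy.symm hvy.symm
    have hR1 : R y z := ⟨h3, hvy, h1⟩
    have : H.neighborFinset y0 = {⟨z, h3.right.mem_vertexSet⟩} := by
      ext ⟨b, hb⟩
      rw [SimpleGraph.mem_neighborFinset, hadj, Finset.mem_singleton, Subtype.mk.injEq]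
      constructor
      · rintro ⟨a1, a2, a3, a4⟩
        rcases h4 b a2.1 (fun hh => a1 (Subtype.ext hh.symm)) with r | r
        · exact absurd r a2.2.2
        · exact r
      · rintro rfl
        refine ⟨fun hh => h2 (congrArg Subtype.val hh).symm, hR1, Relation.ReflTransGen.refl,
          Relation.ReflTransGen.single hR1⟩
    rw [← SimpleGraph.card_neighborFinset_eq_degree, this]
    simp
  obtain ⟨⟨x, hx⟩, hne, hxo⟩ := H.exists_ne_odd_degree_of_exists_odd_degree y0 hodd
  apply (Nat.not_even_iff_odd.2 hxo)
  by_cases hr : Relation.ReflTransGen R y x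
  · obtain ⟨hLV, hxv⟩ := hreach x hr
    have hxy : x ≠ y := fun hh => hne (Subtype.ext hh)
    have hxy' : x ≠ y' := by rintro rfl; exact hcon hr
    obtain ⟨p, q, hpq, hpx, hqx, hp, hq, hall⟩ := h.two'' he hLV
    have hnv : ∀ p, K.LA e x p → p ≠ v := by
      rintro p hp rfl
      rcases hv x hp.symm hxv with r | r
      · exact hxy r
      · exact hxy' r
    have hRp : R x p := ⟨hp, hxv, hnv p hp⟩
    have hRq : R x q := ⟨hq, hxv, hnv q hq⟩
    have : H.neighborFinset ⟨x, hx⟩ =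
        {⟨p, hp.right.mem_vertexSet⟩, ⟨q, hq.right.mem_vertexSet⟩} := by
      ext ⟨b, hb⟩
      rw [SimpleGraph.mem_neighborFinset, hadj, Finset.mem_insert, Finset.mem_singleton,
        Subtype.mk.injEq, Subtype.mk.injEq]
      constructor
      · rintro ⟨a1, a2, a3, a4⟩
        exact hall b a2.1 (fun hh => a1 (Subtype.ext hh.symm))
      · rintro (rfl | rfl)
        · exact ⟨fun hh => hpx (congrArg Subtype.val hh).symm, hRp, hr, hr.tail hRp⟩
        · exact ⟨fun hh => hqx (congrArg Subtype.val hh).symm, hRq, hr, hr.tail hRq⟩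
    rw [← SimpleGraph.card_neighborFinset_eq_degree, this, Finset.card_pair]
    · norm_num
    · intro hh; exact hpq (congrArg Subtype.val hh)
  · have : H.neighborFinset ⟨x, hx⟩ = ∅ := by
      ext b
      rw [SimpleGraph.mem_neighborFinset, hadj]
      simp only [Finset.notMem_empty, iff_false]
      exact fun hh => hr hh.2.2.1
    rw [← SimpleGraph.card_neighborFinset_eq_degree, this]
    simp



theorem NP.bd_ex {K : SComplex} (h : NP K) {u v : ℕ} (huv : u ≠ v) {s : Finset ℕ}
    (hu : u ∉ s) (hv : v ∉ s) (hs : insert u s ∈ K.faces) :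
    ∃ r, s ⊆ r ∧ r.card = 3 ∧ u ∉ r ∧ v ∉ r ∧ insert u r ∈ K.faces := by
  have main : ∃ F ∈ K.faces, insert u s ⊆ F ∧ F.card = 4 ∧ v ∉ F := by
    obtain ⟨F, hF, hsF, h4⟩ := h.ext _ hs
    by_cases hvF : v ∈ F
    · have h3 : (F.erase v).card = 3 := by rw [Finset.card_erase_of_mem hvF, h4]
      have huF : u ∈ F.erase v := Finset.mem_erase.2 ⟨huv, hsF (by simp)⟩
      have hr : F.erase v ∈ K.faces := down hF (Finset.erase_subset _ _) ⟨u, huF⟩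
      obtain ⟨y, z, hyz, hall⟩ := h.two _ hr h3
      have : ∃ x, K.LV (F.erase v) x ∧ x ≠ v := by
        by_cases hy : y = v
        · exact ⟨z, (hall z).2 (Or.inr rfl), by rintro rfl; exact hyz hy⟩
        · exact ⟨y, (hall y).2 (Or.inl rfl), hy⟩
      obtain ⟨x, hx, hxv⟩ := this
      refine ⟨_, hx.2, ?_, ?_, ?_⟩
      · intro a ha
        refine Finset.mem_insert_of_mem (Finset.mem_erase.2 ⟨?_, hsF ha⟩)
        rintro rfl
        rcases Finset.mem_insert.1 ha with h | h
        · exact huv h.symm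
        · exact hv h
      · rw [Finset.card_insert_of_notMem hx.1, h3]
      · simp [hxv.symm]
    · exact ⟨F, hF, hsF, h4, hvF⟩
  obtain ⟨F, hF, hsF, h4, hvF⟩ := main
  have huF : u ∈ F := hsF (by simp)
  refine ⟨F.erase u, ?_, ?_, by simp, fun hh => hvF (Finset.mem_of_mem_erase hh), ?_⟩
  · intro a ha
    refine Finset.mem_erase.2 ⟨?_, hsF (by simp [ha])⟩
    rintro rfl; exact hu ha
  · rw [Finset.card_erase_of_mem huF, h4]
  · rw [Finset.insert_erase huF]; exact hF

/-- The link condition, in elementwise form. -/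
def LC (K : SComplex) (u v : ℕ) : Prop := ∀ s : Finset ℕ, s.Nonempty → u ∉ s → v ∉ s →
  insert u s ∈ K.faces → insert v s ∈ K.faces → insert u (insert v s) ∈ K.faces

theorem LC.symm {K : SComplex} {u v : ℕ} (h : LC K u v) : LC K v u := by
  intro s h1 h2 h3 h4 h5
  rw [Finset.insert_comm]; exact h s h1 h3 h2 h5 h4

theorem LC.eq {K : SComplex} {u v : ℕ} (huv : u ≠ v) (h : LC K u v) :
    (K.lk {u}).faces ∩ (K.lk {v}).faces = (K.lk {u, v}).faces := by
  ext s
  rw [Finset.mem_inter, mem_lk, mem_lk, mem_lk]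
  have e1 : s ∪ {u} = insert u s := by ext; simp
  have e2 : s ∪ {v} = insert v s := by ext; simp
  have e3 : s ∪ {u, v} = insert u (insert v s) := by ext; simp
  rw [e1, e2, e3]
  simp only [Finset.disjoint_singleton_right, Finset.disjoint_insert_right]
  constructor
  · rintro ⟨⟨a, b, c⟩, _, d, e⟩
    exact ⟨a, ⟨b, d⟩, h s a b d c e⟩
  · rintro ⟨a, ⟨b, d⟩, e⟩
    exact ⟨⟨a, b, down e (by intro x; simp; tauto) (by simp)⟩,
      a, d, down e (by intro x; simp; tauto) (by simp)⟩

theorem NP.not_both {K : SComplex} (h : NP K) {u v : ℕ} (huv : u ≠ v) (hL : LC K u v)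
    {r : Finset ℕ} (hr : r.card = 3) (hu : u ∉ r) (hv : v ∉ r) (h1 : insert u r ∈ K.faces)
    (h2 : insert v r ∈ K.faces) : False := by
  have := h.card _ (hL r (Finset.card_pos.1 (by omega)) hu hv h1 h2)
  rw [Finset.card_insert_of_notMem (by simp [huv, hu]), Finset.card_insert_of_notMem hv] at this
  omega

theorem NP.bd_of {K : SComplex} (h : NP K) {u v : ℕ} (huv : u ≠ v) (hL : LC K u v)
    {s : Finset ℕ} (hne : s.Nonempty) (hu : u ∉ s) (hv : v ∉ s) (hs : insert u s ∈ K.faces) :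
    s ∈ bdryFaces (K.faces.filter fun α => u ∉ α ∧ v ∉ α) 3 := by
  obtain ⟨r, hsr, h3, hur, hvr, hr⟩ := h.bd_ex huv hu hv hs
  have hrne : r.Nonempty := hne.mono hsr
  have hrK : r ∈ K.faces := down hr (Finset.subset_insert _ _) hrne
  simp only [bdryFaces, Finset.mem_filter]
  refine ⟨⟨down hs (Finset.subset_insert _ _) hne, hu, hv⟩, r, ⟨hrK, hur, hvr⟩, hsr, h3, ?_⟩
  have : ∃ y, y ≠ u ∧ K.LV r y ∧ ∀ x, K.LV r x → x = u ∨ x = y := by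
    obtain ⟨y, z, hyz, hall⟩ := h.two r hrK h3
    rcases (hall u).1 ⟨hur, hr⟩ with rfl | rfl
    · exact ⟨z, hyz.symm, (hall z).2 (Or.inr rfl), fun x hx => (hall x).1 hx⟩
    · exact ⟨y, hyz, (hall y).2 (Or.inl rfl), fun x hx => ((hall x).1 hx).symm⟩
  obtain ⟨y, hyu, hy, hall⟩ := this
  have hyv : y ≠ v := by
    rintro rfl
    exact h.not_both huv hL h3 hur hvr hr hy.2
  rw [Finset.card_eq_one]
  refine ⟨insert y r, ?_⟩
  ext F
  simp only [Finset.mem_filter, Finset.mem_singleton]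
  constructor
  · rintro ⟨⟨hF, huF, hvF⟩, h4, hs⟩
    obtain ⟨a, ha⟩ := Finset.card_eq_one.1 (show (F \ r).card = 1 by
      rw [Finset.card_sdiff_of_subset hs]; omega)
    have ha' : a ∈ F \ r := by rw [ha]; simp
    have hFe : F = insert a r := by
      rw [← Finset.sdiff_union_of_subset hs, ha]; rfl
    rw [Finset.mem_sdiff] at ha'
    rcases hall a ⟨ha'.2, hFe ▸ hF⟩ with rfl | rfl
    · exact absurd ha'.1 huF
    · exact hFe
  · rintro rfl
    refine ⟨⟨hy.2, ?_, ?_⟩, ?_, Finset.subset_insert _ _⟩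
    · simp [hyu.symm, hur]
    · simp [hyv.symm, hvr]
    · rw [Finset.card_insert_of_notMem hy.1, h3]

theorem NP.bd_iff {K : SComplex} (h : NP K) {u v : ℕ} (huv : u ≠ v) (hL : LC K u v)
    {s : Finset ℕ} : s ∈ bdryFaces (K.faces.filter fun α => u ∉ α ∧ v ∉ α) 3 ↔
      s.Nonempty ∧ u ∉ s ∧ v ∉ s ∧ (insert u s ∈ K.faces ∨ insert v s ∈ K.faces) := by
  constructor
  · intro hs
    simp only [bdryFaces, Finset.mem_filter] at hs
    obtain ⟨⟨hsK, hus, hvs⟩, r, ⟨hrK, hur, hvr⟩, hsr, h3, hcard⟩ := hs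
    refine ⟨nonempty_of_mem hsK, hus, hvs, ?_⟩
    obtain ⟨y, z, hyz, hall⟩ := h.two r hrK h3
    have hy := (hall y).2 (Or.inl rfl)
    have hz := (hall z).2 (Or.inr rfl)
    have hsub : ∀ a, insert a s ⊆ insert a r := fun a => Finset.insert_subset_insert _ hsr
    by_cases hyu : y = u
    · subst hyu; exact Or.inl (down hy.2 (hsub _) (by simp))
    by_cases hyv : y = v
    · subst hyv; exact Or.inr (down hy.2 (hsub _) (by simp))
    by_cases hzu : z = u
    · subst hzu; exact Or.inl (down hz.2 (hsub _) (by simp))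
    by_cases hzv : z = v
    · subst hzv; exact Or.inr (down hz.2 (hsub _) (by simp))
    exfalso
    obtain ⟨F, hF⟩ := Finset.card_eq_one.1 hcard
    have m1 : ∀ a, K.LV r a → a ≠ u → a ≠ v → insert a r = F := by
      intro a ha hau hav
      rw [← Finset.mem_singleton, ← hF]
      simp only [Finset.mem_filter]
      refine ⟨⟨ha.2, ?_, ?_⟩, ?_, Finset.subset_insert _ _⟩
      · simp [Ne.symm hau, hur]
      · simp [Ne.symm hav, hvr]
      · rw [Finset.card_insert_of_notMem ha.1, h3]
    have e := (m1 y hy hyu hyv).trans (m1 z hz hzu hzv).symm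
    have : y ∈ insert z r := by rw [← e]; simp
    rcases Finset.mem_insert.1 this with h | h
    · exact hyz h
    · exact hy.1 h
  · rintro ⟨hne, hu, hv, hs | hs⟩
    · exact h.bd_of huv hL hne hu hv hs
    · have := h.bd_of huv.symm hL.symm hne hv hu hs
      simpa only [and_comm] using this

/-- the simplicial map of the contraction -/
def phi (u v w x : ℕ) : ℕ := if x = u ∨ x = v then w else x

theorem phi_fix {u v w x : ℕ} (h1 : x ≠ u) (h2 : x ≠ v) : phi u v w x = x := by simp [phi, h1, h2]

theorem image_phi_fix {u v w : ℕ} {s : Finset ℕ} (h1 : u ∉ s) (h2 : v ∉ s) :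
    s.image (phi u v w) = s := by
  rw [Finset.image_congr (g := id), Finset.image_id]
  intro x hx
  exact phi_fix (by rintro rfl; exact h1 hx) (by rintro rfl; exact h2 hx)

/-- the contracted complex -/
def con (K : SComplex) (u v w : ℕ) : SComplex where
  faces := K.faces.image (fun β => β.image (phi u v w))
  not_empty_mem := by
    intro h
    obtain ⟨β, hβ, he⟩ := Finset.mem_image.1 h
    rw [Finset.image_eq_empty] at he
    exact K.not_empty_mem (he ▸ hβ)
  down_closed := by
    intro s hs t hts ht
    obtain ⟨β, hβ, rfl⟩ := Finset.mem_image.1 hs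
    obtain ⟨γ, hγ, rfl⟩ := Finset.subset_image_iff.1 hts
    refine Finset.mem_image.2 ⟨γ, ?_, rfl⟩
    refine K.down_closed β hβ γ (by exact_mod_cast hγ) ?_
    rintro rfl; exact ht rfl

theorem mem_con {K : SComplex} {u v w : ℕ} {α : Finset ℕ} :
    α ∈ (K.con u v w).faces ↔ ∃ β ∈ K.faces, β.image (phi u v w) = α := Finset.mem_image

/-- The membership criterion for the contraction -/
theorem mem_con' {K : SComplex} {u v w : ℕ} (hw : w ∉ K.vertexSet) (huv : {u, v} ∈ K.faces)
    {α : Finset ℕ} : α ∈ (K.con u v w).faces ↔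
    u ∉ α ∧ v ∉ α ∧ ((w ∉ α ∧ α ∈ K.faces) ∨
      (w ∈ α ∧ (insert u (α.erase w) ∈ K.faces ∨ insert v (α.erase w) ∈ K.faces))) := by
  have hwu : w ≠ u := by rintro rfl; exact hw (mem_vertexSet_of huv (by simp))
  have hwv : w ≠ v := by rintro rfl; exact hw (mem_vertexSet_of huv (by simp))
  rw [mem_con]
  constructor
  · rintro ⟨β, hβ, rfl⟩
    have hwβ : w ∉ β := fun h => hw (mem_vertexSet_of hβ h)
    have e : ∀ x, x ≠ w → (x ∈ β.image (phi u v w) ↔ x ∈ β ∧ x ≠ u ∧ x ≠ v) := by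
      intro x hx
      rw [Finset.mem_image]
      constructor
      · rintro ⟨b, hb, rfl⟩
        unfold phi at hx ⊢
        split_ifs at hx ⊢ with h
        · exact absurd rfl hx
        · push Not at h; exact ⟨hb, h⟩
      · rintro ⟨h1, h2, h3⟩; exact ⟨x, h1, phi_fix h2 h3⟩
    have ew : w ∈ β.image (phi u v w) ↔ (u ∈ β ∨ v ∈ β) := by
      rw [Finset.mem_image]
      constructor
      · rintro ⟨b, hb, hbw⟩
        unfold phi at hbw
        split_ifs at hbw with h
        · rcases h with rfl | rfl
          · exact Or.inl hb
          · exact Or.inr hb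
        · exact absurd (hbw ▸ hb) hwβ
      · rintro (h | h)
        · exact ⟨u, h, by simp [phi]⟩
        · exact ⟨v, h, by simp [phi]⟩
    refine ⟨?_, ?_, ?_⟩
    · rw [e u hwu.symm]; tauto
    · rw [e v hwv.symm]; tauto
    · by_cases hc : u ∈ β ∨ v ∈ β
      · refine Or.inr ⟨ew.2 hc, ?_⟩
        rcases hc with hc | hc
        · left
          refine down hβ ?_ (by simp)
          intro x hx
          rcases Finset.mem_insert.1 hx with rfl | hx
          · exact hc
          · rw [Finset.mem_erase] at hx
            exact ((e x hx.1).1 hx.2).1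
        · right
          refine down hβ ?_ (by simp)
          intro x hx
          rcases Finset.mem_insert.1 hx with rfl | hx
          · exact hc
          · rw [Finset.mem_erase] at hx
            exact ((e x hx.1).1 hx.2).1
      · refine Or.inl ⟨fun h => hc (ew.1 h), ?_⟩
        push Not at hc
        rw [image_phi_fix hc.1 hc.2]; exact hβ
  · rintro ⟨hu, hv, ⟨_, h⟩ | ⟨hwα, h⟩⟩
    · exact ⟨α, h, image_phi_fix hu hv⟩
    · rcases h with h | h
      · refine ⟨_, h, ?_⟩
        rw [Finset.image_insert, image_phi_fix (by simp [hu]) (by simp [hv])]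
        rw [show phi u v w u = w by simp [phi]]
        exact Finset.insert_erase hwα
      · refine ⟨_, h, ?_⟩
        rw [Finset.image_insert, image_phi_fix (by simp [hu]) (by simp [hv])]
        rw [show phi u v w v = w by simp [phi]]
        exact Finset.insert_erase hwα

theorem NP.con_contraction {K : SComplex} (h : NP K) {u v w : ℕ} (huv : u ≠ v)
    (hw : w ∉ K.vertexSet) (he : {u, v} ∈ K.faces) (hL : LC K u v) :
    EdgeContraction K (K.con u v w) := by
  refine ⟨u, v, he, huv, hL.eq huv, w, hw, ?_⟩
  have hwu : w ≠ u := by rintro rfl; exact hw (mem_vertexSet_of he (by simp))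
  have hwv : w ≠ v := by rintro rfl; exact hw (mem_vertexSet_of he (by simp))
  have hu : {u} ∈ K.faces := down he (by simp) (by simp)
  have hwK : ∀ s ∈ K.faces, w ∉ s := fun s hs hws => hw (mem_vertexSet_of hs hws)
  have hwins : ∀ (s : Finset ℕ) a, a ≠ w → insert a s ∈ K.faces → w ∉ s := fun s a _ hs hws =>
    hw (mem_vertexSet_of hs (by simp [hws]))
  ext α
  rw [mem_con' hw he]
  simp only [coneFaces, Finset.mem_union, Finset.mem_filter, Finset.mem_image, Finset.mem_singleton,
    h.bd_iff huv hL]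
  constructor
  · rintro ⟨h1, h2, ⟨h3, h4⟩ | ⟨h3, h4⟩⟩
    · exact Or.inl ⟨h4, h1, h2⟩
    · right
      by_cases hα : α = {w}
      · right; exact hα
      · left; right
        refine ⟨α.erase w, ⟨?_, by simp [h1], by simp [h2], h4⟩, Finset.insert_erase h3⟩
        rw [Finset.nonempty_iff_ne_empty]
        intro h0
        apply hα
        rw [← Finset.insert_erase h3, h0]; rfl
  · rintro (⟨h1, h2, h3⟩ | ((⟨h1, h2, h3, h4⟩ | ⟨s, ⟨h1, h2, h3, h4⟩, rfl⟩) | rfl))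
    · exact ⟨h2, h3, Or.inl ⟨hwK _ h1, h1⟩⟩
    · refine ⟨h2, h3, Or.inl ⟨?_, ?_⟩⟩
      · rcases h4 with h4 | h4
        · exact hwins _ u hwu.symm h4
        · exact hwins _ v hwv.symm h4
      · rcases h4 with h4 | h4
        · exact down h4 (Finset.subset_insert _ _) h1
        · exact down h4 (Finset.subset_insert _ _) h1
    · have hws : w ∉ s := by
        rcases h4 with h4 | h4
        · exact hwins _ u hwu.symm h4
        · exact hwins _ v hwv.symm h4
      refine ⟨by simp [hwu.symm, h2], by simp [hwv.symm, h3], Or.inr ⟨by simp, ?_⟩⟩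
      rw [Finset.erase_insert hws]; exact h4
    · refine ⟨by simp [hwu.symm], by simp [hwv.symm], Or.inr ⟨by simp, Or.inl ?_⟩⟩
      simpa using hu



theorem con_comm (K : SComplex) (u v w : ℕ) : K.con u v w = K.con v u w := by
  have : phi u v w = phi v u w := by ext x; simp only [phi, or_comm]
  simp only [con, this]

theorem mem_con_w {K : SComplex} {u v w : ℕ} (hw : w ∉ K.vertexSet) (he : {u, v} ∈ K.faces)
    {p : Finset ℕ} (hp : w ∉ p) : insert w p ∈ (K.con u v w).faces ↔
    u ∉ p ∧ v ∉ p ∧ (insert u p ∈ K.faces ∨ insert v p ∈ K.faces) := by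
  have hwu : w ≠ u := by rintro rfl; exact hw (mem_vertexSet_of he (by simp))
  have hwv : w ≠ v := by rintro rfl; exact hw (mem_vertexSet_of he (by simp))
  rw [mem_con' hw he, Finset.erase_insert hp]
  simp [hwu.symm, hwv.symm]

theorem mem_con_nw {K : SComplex} {u v w : ℕ} (hw : w ∉ K.vertexSet) (he : {u, v} ∈ K.faces)
    {p : Finset ℕ} (hp : w ∉ p) : p ∈ (K.con u v w).faces ↔
    u ∉ p ∧ v ∉ p ∧ p ∈ K.faces := by
  rw [mem_con' hw he]
  simp [hp]

theorem LV_con_w {K : SComplex} {u v w : ℕ} (hw : w ∉ K.vertexSet) (he : {u, v} ∈ K.faces)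
    {p : Finset ℕ} (hp : w ∉ p) (hu : u ∉ p) (hv : v ∉ p) (x : ℕ) :
    (K.con u v w).LV (insert w p) x ↔
      (x ≠ v ∧ K.LV (insert u p) x) ∨ (x ≠ u ∧ K.LV (insert v p) x) := by
  have hwu : w ≠ u := by rintro rfl; exact hw (mem_vertexSet_of he (by simp))
  have hwv : w ≠ v := by rintro rfl; exact hw (mem_vertexSet_of he (by simp))
  have hwK : ∀ s ∈ K.faces, w ∉ s := fun s hs hws => hw (mem_vertexSet_of hs hws)
  unfold LV
  rw [Finset.insert_comm x w, Finset.insert_comm x u, Finset.insert_comm x v]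
  by_cases hxw : x = w
  · subst hxw
    have h1 : ∀ a, insert a (insert x p) ∉ K.faces := fun a ha => hwK _ ha (by simp)
    simp [h1]
  · rw [mem_con_w hw he (by simp [Ne.symm hxw, hp])]
    simp only [Finset.mem_insert, not_or, hu, hv, not_false_eq_true, and_true, hxw, true_and]
    have := @eq_comm _ u x
    have := @eq_comm _ v x
    tauto

theorem LA_con_w {K : SComplex} {u v w : ℕ} (hw : w ∉ K.vertexSet) (he : {u, v} ∈ K.faces)
    {p : Finset ℕ} (hp : w ∉ p) (hu : u ∉ p) (hv : v ∉ p) {x y : ℕ} (hx : x ≠ v) (hy : y ≠ v)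
    (h : K.LA (insert u p) x y) : (K.con u v w).LA (insert w p) x y := by
  have hwK : ∀ s ∈ K.faces, w ∉ s := fun s hs hws => hw (mem_vertexSet_of hs hws)
  have h1 := (LV_con_w hw he hp hu hv x).2 (Or.inl ⟨hx, h.left⟩)
  have h2 := (LV_con_w hw he hp hu hv y).2 (Or.inl ⟨hy, h.right⟩)
  refine ⟨h1.1, h2.1, ?_⟩
  have e : insert x (insert y (insert w p)) = insert w (insert x (insert y p)) := by
    ext; simp; tauto
  have e' : insert x (insert y (insert u p)) = insert u (insert x (insert y p)) := by
    ext; simp; tauto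
  have h3 := h.2.2
  rw [e'] at h3
  have h4 := h.1
  have h5 := h.2.1
  simp only [Finset.mem_insert, not_or] at h4 h5
  rw [e, mem_con_w hw he]
  · refine ⟨?_, ?_, Or.inl h3⟩
    · simp [Ne.symm h4.1, Ne.symm h5.1, hu]
    · simp [hx.symm, hy.symm, hv]
  · have := hwK _ h3
    simp only [Finset.mem_insert, not_or] at this ⊢
    tauto

theorem NP.con_ext {K : SComplex} (h : NP K) {u v w : ℕ} (huv : u ≠ v) (hw : w ∉ K.vertexSet)
    (s : Finset ℕ) (hs : s ∈ (K.con u v w).faces) :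
    ∃ F ∈ (K.con u v w).faces, s ⊆ F ∧ F.card = 4 := by
  have hwK : ∀ s ∈ K.faces, w ∉ s := fun s hs hws => hw (mem_vertexSet_of hs hws)
  obtain ⟨β, hβ, rfl⟩ := mem_con.1 hs
  obtain ⟨F, hF, hβF, h4⟩ := h.ext β hβ
  have inj : ∀ G ∈ K.faces, G.card = 4 → ¬ (u ∈ G ∧ v ∈ G) →
      (G.image (phi u v w)).card = 4 := by
    intro G hG hG4 hnot
    rw [← hG4]
    apply Finset.card_image_of_injOn
    intro a ha b hb hab
    have hw1 := hwK G hG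
    unfold phi at hab
    simp only [Finset.mem_coe] at ha hb
    grind
  by_cases hboth : u ∈ F ∧ v ∈ F
  · obtain ⟨hu, hv⟩ := hboth
    obtain ⟨r, hr, hr3, hur, hvr, hrK⟩ := h.bd_ex huv (s := (F.erase u).erase v)
      (by simp) (by simp) (down hF (by
        intro x; simp only [Finset.mem_insert, Finset.mem_erase]; rintro (rfl | hx)
        exacts [hu, hx.2.2]) (by simp))
    refine ⟨_, mem_con.2 ⟨_, hrK, rfl⟩, ?_, inj _ hrK ?_ ?_⟩
    · intro x hx
      obtain ⟨b, hb, rfl⟩ := Finset.mem_image.1 hx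
      rw [Finset.mem_image]
      by_cases hb' : b = u ∨ b = v
      · exact ⟨u, by simp, by simp [phi, hb']⟩
      · push Not at hb'
        exact ⟨b, by
          refine Finset.mem_insert_of_mem (hr ?_)
          simp [hb'.1, hb'.2, hβF hb], rfl⟩
    · rw [Finset.card_insert_of_notMem hur, hr3]
    · simp [hvr, huv.symm]
  · exact ⟨_, mem_con.2 ⟨F, hF, rfl⟩, Finset.image_subset_image hβF, inj F hF h4 hboth⟩

theorem NP.con_two {K : SComplex} (h : NP K) {u v w : ℕ} (huv : u ≠ v) (hw : w ∉ K.vertexSet)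
    (he : {u, v} ∈ K.faces) (hL : LC K u v)
    (s : Finset ℕ) (hs : s ∈ (K.con u v w).faces) (h3 : s.card = 3) :
    ∃ y z, y ≠ z ∧ ∀ x, (K.con u v w).LV s x ↔ (x = y ∨ x = z) := by
  have hwu : w ≠ u := by rintro rfl; exact hw (mem_vertexSet_of he (by simp))
  have hwv : w ≠ v := by rintro rfl; exact hw (mem_vertexSet_of he (by simp))
  have hwK : ∀ s ∈ K.faces, w ∉ s := fun s hs hws => hw (mem_vertexSet_of hs hws)
  by_cases hws : w ∈ s
  · obtain ⟨p, hp, rfl⟩ : ∃ p, w ∉ p ∧ s = insert w p :=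
      ⟨s.erase w, by simp, (Finset.insert_erase hws).symm⟩
    rw [Finset.card_insert_of_notMem hp] at h3
    obtain ⟨hu, hv, hor⟩ := (mem_con_w hw he hp).1 hs
    simp only [LV_con_w hw he hp hu hv]
    have hne : p.Nonempty := Finset.card_pos.1 (by omega)
    by_cases hboth : insert u p ∈ K.faces ∧ insert v p ∈ K.faces
    · obtain ⟨h1, h2⟩ := hboth
      have h12 := hL p hne hu hv h1 h2
      have lv1 : K.LV (insert u p) v := ⟨by simp [huv.symm, hv], by
        rw [Finset.insert_comm]; exact h12⟩
      have lv2 : K.LV (insert v p) u := ⟨by simp [huv, hu], h12⟩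
      obtain ⟨y, z, hyz, hall⟩ := h.two (insert u p) h1 (by
        rw [Finset.card_insert_of_notMem hu]; omega)
      obtain ⟨y', z', hyz', hall'⟩ := h.two (insert v p) h2 (by
        rw [Finset.card_insert_of_notMem hv]; omega)
      have nocommon : ∀ d, d ≠ u → d ≠ v → K.LV (insert u p) d → K.LV (insert v p) d → False := by
        intro d hdu hdv ha hb
        refine h.not_both huv hL (r := insert d p) ?_ ?_ ?_ ?_ ?_
        · rw [Finset.card_insert_of_notMem]
          · omega
          · exact fun hh => ha.1 (by simp [hh])
        · simp [hdu.symm, hu]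
        · simp [hdv.symm, hv]
        · rw [Finset.insert_comm]; exact ha.2
        · rw [Finset.insert_comm]; exact hb.2
      have : ∃ d, d ≠ v ∧ K.LV (insert u p) d ∧ ∀ x, K.LV (insert u p) x → x = v ∨ x = d := by
        rcases (hall v).1 lv1 with rfl | rfl
        · exact ⟨z, hyz.symm, (hall z).2 (Or.inr rfl), fun x hx => (hall x).1 hx⟩
        · exact ⟨y, hyz, (hall y).2 (Or.inl rfl), fun x hx => ((hall x).1 hx).symm⟩
      obtain ⟨d, hd1, hd2, hd3⟩ := this
      have : ∃ d, d ≠ u ∧ K.LV (insert v p) d ∧ ∀ x, K.LV (insert v p) x → x = u ∨ x = d := by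
        rcases (hall' u).1 lv2 with rfl | rfl
        · exact ⟨z', hyz'.symm, (hall' z').2 (Or.inr rfl), fun x hx => (hall' x).1 hx⟩
        · exact ⟨y', hyz', (hall' y').2 (Or.inl rfl), fun x hx => ((hall' x).1 hx).symm⟩
      obtain ⟨e, he1, he2, he3⟩ := this
      have hdu : d ≠ u := by rintro rfl; exact hd2.1 (by simp)
      refine ⟨d, e, ?_, ?_⟩
      · rintro rfl; exact nocommon d hdu hd1 hd2 he2
      · intro x
        constructor
        · rintro (⟨ha, hb⟩ | ⟨ha, hb⟩)
          · exact Or.inl ((hd3 x hb).resolve_left ha)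
          · exact Or.inr ((he3 x hb).resolve_left ha)
        · rintro (rfl | rfl)
          · exact Or.inl ⟨hd1, hd2⟩
          · exact Or.inr ⟨he1, he2⟩
    · have nolv : ∀ a x, insert a p ∉ K.faces → ¬ K.LV (insert a p) x := by
        intro a x ha hx
        exact ha (down hx.2 (Finset.subset_insert _ _) (by simp))
      rcases hor with hh | hh
      · have hnv : insert v p ∉ K.faces := fun h' => hboth ⟨hh, h'⟩
        obtain ⟨y, z, hyz, hall⟩ := h.two (insert u p) hh (by
          rw [Finset.card_insert_of_notMem hu]; omega)
        refine ⟨y, z, hyz, fun x => ?_⟩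
        rw [← hall]
        constructor
        · rintro (hx | hx)
          · exact hx.2
          · exact absurd hx.2 (nolv v x hnv)
        · intro hx
          refine Or.inl ⟨?_, hx⟩
          rintro rfl
          exact hnv (down hx.2 (by intro a; simp; tauto) (by simp))
      · have hnv : insert u p ∉ K.faces := fun h' => hboth ⟨h', hh⟩
        obtain ⟨y, z, hyz, hall⟩ := h.two (insert v p) hh (by
          rw [Finset.card_insert_of_notMem hv]; omega)
        refine ⟨y, z, hyz, fun x => ?_⟩
        rw [← hall]
        constructor
        · rintro (hx | hx)
          · exact absurd hx.2 (nolv u x hnv)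
          · exact hx.2
        · intro hx
          refine Or.inr ⟨?_, hx⟩
          rintro rfl
          exact hnv (down hx.2 (by intro a; simp; tauto) (by simp))
  · obtain ⟨hu, hv, hsK⟩ := (mem_con_nw hw he hws).1 hs
    obtain ⟨y, z, hyz, hall⟩ := h.two s hsK h3
    have hy := (hall y).2 (Or.inl rfl)
    have hz := (hall z).2 (Or.inr rfl)
    have hyw : y ≠ w := by rintro rfl; exact hwK _ hy.2 (by simp)
    have hzw : z ≠ w := by rintro rfl; exact hwK _ hz.2 (by simp)
    have hnb := h.not_both huv hL h3 hu hv
    refine ⟨phi u v w y, phi u v w z, ?_, ?_⟩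
    · have h1 := hy.2
      have h2 := hz.2
      unfold phi
      grind
    · have back : ∀ y, K.LV s y → (K.con u v w).LV s (phi u v w y) := by
        intro y hy
        refine ⟨?_, ?_⟩
        · unfold phi; split_ifs
          · exact hws
          · exact hy.1
        · have := (mem_con (u := u) (v := v) (w := w)).2 ⟨_, hy.2, rfl⟩
          rwa [Finset.image_insert, image_phi_fix hu hv] at this
      intro x
      constructor
      · intro hx
        by_cases hxw : x = w
        · subst hxw
          obtain ⟨_, _, hor⟩ := (mem_con_w hw he hws).1 hx.2
          rcases hor with hor | hor
          · rcases (hall u).1 ⟨hu, hor⟩ with rfl | rfl <;> simp [phi]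
          · rcases (hall v).1 ⟨hv, hor⟩ with rfl | rfl <;> simp [phi]
        · obtain ⟨h1, h2, h3⟩ := (mem_con_nw hw he (by simp [Ne.symm hxw, hws])).1 hx.2
          simp only [Finset.mem_insert, not_or] at h1 h2
          rcases (hall x).1 ⟨hx.1, h3⟩ with rfl | rfl
          · left; rw [phi_fix (Ne.symm h1.1) (Ne.symm h2.1)]
          · right; rw [phi_fix (Ne.symm h1.1) (Ne.symm h2.1)]
      · rintro (rfl | rfl)
        · exact back _ hy
        · exact back _ hz



theorem LA.face_left {K : SComplex} {p : Finset ℕ} {a b c : ℕ} (h : K.LA (insert c p) a b) :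
    insert a p ∈ K.faces :=
  down h.2.2 (by intro x; simp; tauto) (by simp)

theorem NP.con_path2 {K : SComplex} (h : NP K) {u v w : ℕ} (hw : w ∉ K.vertexSet)
    (he : {u, v} ∈ K.faces) {p : Finset ℕ} (hpc : p.card ≤ 1)
    (hp : w ∉ p) (hu : u ∉ p) (hv : v ∉ p) (hup : insert u p ∈ K.faces) {c : ℕ}
    (hc : K.LV (insert v (insert u p)) c)
    (h1 : ∀ y, K.LV (insert v (insert u p)) y →
      Relation.ReflTransGen ((K.con u v w).LA (insert w p)) y c) {y : ℕ} (hy : K.LV (insert u p) y)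
    (hyv : y ≠ v) : Relation.ReflTransGen ((K.con u v w).LA (insert w p)) y c := by
  have hcv : c ≠ v := by rintro rfl; exact hc.1 (by simp)
  have hc' : K.LV (insert u p) c := ⟨fun hh => hc.1 (by simp only [Finset.mem_insert] at hh ⊢; tauto), down hc.2 (by
    intro a; simp; tauto) (by simp)⟩
  have path := h.conn (insert u p) (by rw [Finset.card_insert_of_notMem hu]; omega) (Or.inr hup)
    y c hy hc'
  have lv : ∀ b, b ≠ v → K.LA (insert u p) v b → K.LV (insert v (insert u p)) b := by
    intro b hb hbb
    exact (LA_iff hbb.1).1 ⟨hbb, hb⟩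
  have sym : ∀ a b, (K.con u v w).LA (insert w p) a b → (K.con u v w).LA (insert w p) b a :=
    fun a b h => h.symm
  have := rtg_map (p := (K.con u v w).LA (insert w p)) (fun x => if x = v then c else x) (by
    intro a b hab
    by_cases hav : a = v <;> by_cases hbv : b = v
    · simp only [hav, hbv]; exact Relation.ReflTransGen.refl
    · subst hav
      simp only [hbv, if_true, if_false]
      exact rtg_symm sym (h1 b (lv b hbv hab))
    · subst hbv
      simp only [hav, if_true, if_false]
      exact h1 a (lv a hav hab.symm)
    · simp only [hav, hbv, if_false]
      exact Relation.ReflTransGen.single (LA_con_w hw he hp hu hv hav hbv hab)) path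
  simpa [hyv, hcv] using this

theorem NP.con_path1 {K : SComplex} (h : NP K) {u v w : ℕ} (hw : w ∉ K.vertexSet)
    (he : {u, v} ∈ K.faces) {p : Finset ℕ} (hpc : p.card ≤ 1)
    (hp : w ∉ p) (hu : u ∉ p) (hv : v ∉ p) (huv : u ≠ v)
    (hup : insert v (insert u p) ∈ K.faces) {c y : ℕ}
    (hc : K.LV (insert v (insert u p)) c) (hy : K.LV (insert v (insert u p)) y) :
      Relation.ReflTransGen ((K.con u v w).LA (insert w p)) y c := by
  have hvu : v ∉ insert u p := by simp [huv.symm, hv]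
  have hc' := (LA_iff hvu).2 hc
  have hy' := (LA_iff hvu).2 hy
  have hcard : (insert v (insert u p)).card = p.card + 2 := by
    rw [Finset.card_insert_of_notMem hvu, Finset.card_insert_of_notMem hu]
  rcases Nat.lt_or_ge p.card 1 with h0 | h0
  · have path := h.conn (insert v (insert u p)) (by omega) (Or.inr hup) y c hy hc
    refine rtg_mono ?_ path
    intro a b hab
    have h1 := hab.1
    have h2 := hab.2.1
    simp only [Finset.mem_insert, not_or] at h1 h2
    refine LA_con_w hw he hp hu hv h1.1 h2.1 ⟨?_, ?_, down hab.2.2 ?_ (by simp)⟩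
    · simp [h1]
    · simp [h2]
    · intro x; simp; tauto
  · by_cases hyc : y = c
    · rw [hyc]
    · have path := h.cycle_minus (e := insert u p) (by
        rw [Finset.card_insert_of_notMem hu]; omega) hy'.1 hc'.1 hy'.2 hc'.2 hyc
      exact rtg_mono (fun a b hab => LA_con_w hw he hp hu hv hab.2.1 hab.2.2 hab.1) path

theorem NP.con_conn {K : SComplex} (h : NP K) {u v w : ℕ} (huv : u ≠ v) (hw : w ∉ K.vertexSet)
    (he : {u, v} ∈ K.faces) (hL : LC K u v)
    (s : Finset ℕ) (h2 : s.card ≤ 2) (hs : s = ∅ ∨ s ∈ (K.con u v w).faces) (y z : ℕ)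
    (hy : (K.con u v w).LV s y) (hz : (K.con u v w).LV s z) :
    Relation.ReflTransGen ((K.con u v w).LA s) y z := by
  have hwu : w ≠ u := by rintro rfl; exact hw (mem_vertexSet_of he (by simp))
  have hwv : w ≠ v := by rintro rfl; exact hw (mem_vertexSet_of he (by simp))
  have hwK : ∀ s ∈ K.faces, w ∉ s := fun s hs hws => hw (mem_vertexSet_of hs hws)
  by_cases hws : w ∈ s
  · obtain ⟨p, hp, rfl⟩ : ∃ p, w ∉ p ∧ s = insert w p :=
      ⟨s.erase w, by simp, (Finset.insert_erase hws).symm⟩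
    rw [Finset.card_insert_of_notMem hp] at h2
    have hs' := hs.resolve_left (by simp)
    obtain ⟨hu, hv, hor⟩ := (mem_con_w hw he hp).1 hs'
    rw [LV_con_w hw he hp hu hv] at hy hz
    have sym : ∀ a b, (K.con u v w).LA (insert w p) a b → (K.con u v w).LA (insert w p) b a :=
      fun a b h => h.symm
    have he' : {v, u} ∈ K.faces := by rw [Finset.pair_comm]; exact he
    by_cases hboth : insert u p ∈ K.faces ∧ insert v p ∈ K.faces
    · obtain ⟨h1, h1'⟩ := hboth
      have h12 : insert v (insert u p) ∈ K.faces := by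
        by_cases hp0 : p = ∅
        · subst hp0; simpa using he'
        · rw [Finset.insert_comm]
          exact hL p (Finset.nonempty_iff_ne_empty.2 hp0) hu hv h1 h1'
      have hcard : (insert v (insert u p)).card = p.card + 2 := by
        rw [Finset.card_insert_of_notMem (by simp [huv.symm, hv]), Finset.card_insert_of_notMem hu]
      obtain ⟨c, hc⟩ : ∃ c, K.LV (insert v (insert u p)) c := by
        obtain ⟨F, hF, hsF, h4⟩ := h.ext _ h12
        have : ∃ y ∈ F, y ∉ (insert v (insert u p)) := by
          by_contra hcon
          push Not at hcon
          have := Finset.card_le_card (show F ⊆ (insert v (insert u p)) from hcon)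
          omega
        obtain ⟨y, hy, hys⟩ := this
        refine ⟨y, hys, down hF ?_ (by simp)⟩
        intro a ha
        rcases Finset.mem_insert.1 ha with rfl | ha
        exacts [hy, hsF ha]
      have p1 : ∀ y, K.LV (insert v (insert u p)) y →
          Relation.ReflTransGen ((K.con u v w).LA (insert w p)) y c :=
        fun y hy => h.con_path1 hw he (by omega) hp hu hv huv h12 hc hy
      have toc : ∀ y, ((y ≠ v ∧ K.LV (insert u p) y) ∨ (y ≠ u ∧ K.LV (insert v p) y)) →
          Relation.ReflTransGen ((K.con u v w).LA (insert w p)) y c := by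
        rintro y (⟨ha, hb⟩ | ⟨ha, hb⟩)
        · exact h.con_path2 hw he (by omega) hp hu hv h1 hc p1 hb ha
        · rw [con_comm]
          rw [con_comm] at p1
          rw [Finset.insert_comm] at hc p1
          exact h.con_path2 hw he' (by omega) hp hv hu h1' hc p1 hb ha
      exact (toc y hy).trans (rtg_symm sym (toc z hz))
    · have nolv : ∀ a x, insert a p ∉ K.faces → ¬ K.LV (insert a p) x := by
        intro a x ha hx
        exact ha (down hx.2 (Finset.subset_insert _ _) (by simp))
      rcases hor with hh | hh
      · have hnv : insert v p ∉ K.faces := fun h' => hboth ⟨hh, h'⟩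
        have hy1 := (hy.resolve_right fun hx => nolv v _ hnv hx.2).2
        have hz1 := (hz.resolve_right fun hx => nolv v _ hnv hx.2).2
        have path := h.conn _ (by rw [Finset.card_insert_of_notMem hu]; omega) (Or.inr hh) _ _ hy1 hz1
        refine rtg_mono ?_ path
        intro a b hab
        refine LA_con_w hw he hp hu hv ?_ ?_ hab
        · rintro rfl; exact hnv hab.face_left
        · rintro rfl; exact hnv hab.symm.face_left
      · have hnv : insert u p ∉ K.faces := fun h' => hboth ⟨h', hh⟩
        have hy1 := (hy.resolve_left fun hx => nolv u _ hnv hx.2).2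
        have hz1 := (hz.resolve_left fun hx => nolv u _ hnv hx.2).2
        have path := h.conn _ (by rw [Finset.card_insert_of_notMem hv]; omega) (Or.inr hh) _ _ hy1 hz1
        refine rtg_mono ?_ path
        intro a b hab
        rw [con_comm]
        refine LA_con_w hw he' hp hv hu ?_ ?_ hab
        · rintro rfl; exact hnv hab.face_left
        · rintro rfl; exact hnv hab.symm.face_left
  · have hs' : (s = ∅ ∨ s ∈ K.faces) ∧ u ∉ s ∧ v ∉ s := by
      rcases hs with rfl | hs
      · simp
      · have := (mem_con_nw hw he hws).1 hs
        exact ⟨Or.inr this.2.2, this.1, this.2.1⟩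
    obtain ⟨hsK, hu, hv⟩ := hs'
    have lift : ∀ y, (K.con u v w).LV s y → ∃ y0, K.LV s y0 ∧ phi u v w y0 = y := by
      intro x hx
      by_cases hxw : x = w
      · subst hxw
        obtain ⟨_, _, hor⟩ := (mem_con_w hw he hws).1 hx.2
        rcases hor with hor | hor
        · exact ⟨u, ⟨hu, hor⟩, by simp [phi]⟩
        · exact ⟨v, ⟨hv, hor⟩, by simp [phi]⟩
      · obtain ⟨h1, h2, h3⟩ := (mem_con_nw hw he (by simp [Ne.symm hxw, hws])).1 hx.2
        simp only [Finset.mem_insert, not_or] at h1 h2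
        exact ⟨x, ⟨hx.1, h3⟩, phi_fix (Ne.symm h1.1) (Ne.symm h2.1)⟩
    obtain ⟨y0, hy0, rfl⟩ := lift y hy
    obtain ⟨z0, hz0, rfl⟩ := lift z hz
    refine rtg_map _ ?_ (h.conn s h2 hsK y0 z0 hy0 hz0)
    intro a b hab
    apply Relation.ReflTransGen.single
    have hphi : ∀ a, a ∉ s → phi u v w a ∉ s := by
      intro a ha; unfold phi; split_ifs
      · exact hws
      · exact ha
    refine ⟨hphi _ hab.1, hphi _ hab.2.1, ?_⟩
    have := (mem_con (u := u) (v := v) (w := w)).2 ⟨_, hab.2.2, rfl⟩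
    rwa [Finset.image_insert, Finset.image_insert, image_phi_fix hu hv] at this

theorem NP.con_np {K : SComplex} (h : NP K) {u v w : ℕ} (huv : u ≠ v) (hw : w ∉ K.vertexSet)
    (he : {u, v} ∈ K.faces) (hL : LC K u v) : NP (K.con u v w) where
  ne := by
    obtain ⟨s, hs⟩ := h.ne
    exact ⟨_, mem_con.2 ⟨s, hs, rfl⟩⟩
  ext := h.con_ext huv hw
  card := by
    intro s hs
    obtain ⟨β, hβ, rfl⟩ := mem_con.1 hs
    exact Finset.card_image_le.trans (h.card β hβ)
  two := h.con_two huv hw he hL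
  conn := h.con_conn huv hw he hL

theorem con_g2 {K : SComplex} {u v w : ℕ} (huv : u ≠ v) (hw : w ∉ K.vertexSet)
    (he : {u, v} ∈ K.faces) (hd : 4 ≤ K.deg {u, v}) : (K.con u v w).g2 < K.g2 := by
  have hwu : w ≠ u := by rintro rfl; exact hw (mem_vertexSet_of he (by simp))
  have hwv : w ≠ v := by rintro rfl; exact hw (mem_vertexSet_of he (by simp))
  have hwK : ∀ s ∈ K.faces, w ∉ s := fun s hs hws => hw (mem_vertexSet_of hs hws)
  have hf0 : K.fnum 0 ≤ (K.con u v w).fnum 0 + 1 := by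
    unfold fnum
    have hsub : (K.faces.filter fun s => s.card = 0 + 1) ⊆
        insert {v} (((K.con u v w).faces.filter fun s => s.card = 0 + 1).image
          (fun s => s.image (fun x => if x = w then u else x))) := by
      intro s hs
      rw [Finset.mem_filter] at hs
      obtain ⟨a, rfl⟩ := Finset.card_eq_one.1 hs.2
      rw [Finset.mem_insert, Finset.mem_image]
      by_cases hav : a = v
      · left; rw [hav]
      · right
        have haw : a ≠ w := by rintro rfl; exact hwK _ hs.1 (by simp)
        refine ⟨{phi u v w a}, ?_, ?_⟩
        · rw [Finset.mem_filter]
          exact ⟨mem_con.2 ⟨{a}, hs.1, by simp⟩, by simp⟩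
        · unfold phi
          by_cases hau : a = u
          · simp [hau]
          · simp [hau, hav, haw]
    exact (Finset.card_le_card hsub).trans ((Finset.card_insert_le _ _).trans
      (Nat.add_le_add_right Finset.card_image_le 1))
  have hf1 : (K.con u v w).fnum 1 + 5 ≤ K.fnum 1 := by
    classical
    unfold fnum
    set A := (K.con u v w).faces.filter fun s => s.card = 1 + 1 with hA
    set B := K.faces.filter fun s => s.card = 1 + 1 with hB
    let f : Finset ℕ → Finset ℕ := fun s =>
      if w ∈ s then (if insert u (s.erase w) ∈ K.faces then insert u (s.erase w) else
        insert v (s.erase w)) else s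
    have hfB : ∀ s ∈ A, f s ∈ B := by
      intro s hs
      rw [hA, Finset.mem_filter, mem_con' hw he] at hs
      obtain ⟨⟨hu, hv, hor⟩, hc⟩ := hs
      rw [hB, Finset.mem_filter]
      simp only [f]
      by_cases hws : w ∈ s
      · have hor' := (hor.resolve_left fun hh => hh.1 hws).2
        have hce : (s.erase w).card = 1 := by rw [Finset.card_erase_of_mem hws, hc]
        rw [if_pos hws]
        split_ifs with h1
        · exact ⟨h1, by rw [Finset.card_insert_of_notMem (by simp [hu]), hce]⟩
        · exact ⟨hor'.resolve_left h1, by rw [Finset.card_insert_of_notMem (by simp [hv]), hce]⟩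
      · rw [if_neg hws]
        exact ⟨(hor.resolve_right fun hh => hws hh.1).2, hc⟩
    have hinj : Set.InjOn f A := by
      have hrec : ∀ s ∈ A, s = (f s).image (phi u v w) := by
        intro s hs
        rw [hA, Finset.mem_filter, mem_con' hw he] at hs
        obtain ⟨⟨hu, hv, hor⟩, hc⟩ := hs
        simp only [f]
        split_ifs with h1 h2
        · rw [Finset.image_insert, image_phi_fix (by simp [hu]) (by simp [hv]),
            show phi u v w u = w by simp [phi], Finset.insert_erase h1]
        · rw [Finset.image_insert, image_phi_fix (by simp [hu]) (by simp [hv]),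
            show phi u v w v = w by simp [phi], Finset.insert_erase h1]
        · rw [image_phi_fix hu hv]
      intro s hs t ht hst
      rw [hrec s hs, hrec t ht, hst]
    let C : Finset (Finset ℕ) := insert {u, v} ((K.nb {u, v}).image fun x => {v, x})
    have hnb : ∀ x ∈ K.nb {u, v}, x ≠ u ∧ x ≠ v ∧ insert x {u, v} ∈ K.faces := by
      intro x hx
      rw [mem_nb] at hx
      have := hx.1
      simp only [Finset.mem_insert, Finset.mem_singleton, not_or] at this
      exact ⟨this.1, this.2, hx.2⟩
    have hCB : C ⊆ B := by
      intro s hs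
      rw [hB, Finset.mem_filter]
      rcases Finset.mem_insert.1 hs with rfl | hs
      · exact ⟨he, Finset.card_pair huv⟩
      · obtain ⟨x, hx, rfl⟩ := Finset.mem_image.1 hs
        obtain ⟨h1, h2, h3⟩ := hnb x hx
        exact ⟨down h3 (by intro a; simp; tauto) (by simp), Finset.card_pair h2.symm⟩
    have hCc : 5 ≤ C.card := by
      rw [Finset.card_insert_of_notMem, Finset.card_image_of_injOn]
      · rw [← deg_eq]; omega
      · intro x hx y hy hxy
        obtain ⟨h1, h2, h3⟩ := hnb x hx
        have : x ∈ ({v, y} : Finset ℕ) := by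
          have hxy : ({v, x} : Finset ℕ) = {v, y} := hxy
          rw [← hxy]; simp
        simp only [Finset.mem_insert, Finset.mem_singleton] at this
        exact this.resolve_left h2
      · intro hh
        obtain ⟨x, hx, hx'⟩ := Finset.mem_image.1 hh
        obtain ⟨h1, h2, h3⟩ := hnb x hx
        have : x ∈ ({u, v} : Finset ℕ) := by rw [← hx']; simp
        simp only [Finset.mem_insert, Finset.mem_singleton] at this
        tauto
    have hdisj : Disjoint (A.image f) C := by
      rw [Finset.disjoint_left]
      intro s hs hsC
      obtain ⟨a, ha, rfl⟩ := Finset.mem_image.1 hs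
      rw [hA, Finset.mem_filter, mem_con' hw he] at ha
      obtain ⟨⟨hu, hv, hor⟩, hc⟩ := ha
      have hvC : v ∈ f a := by
        rcases Finset.mem_insert.1 hsC with h | h
        · rw [h]; simp
        · obtain ⟨x, hx, hx'⟩ := Finset.mem_image.1 h
          rw [← hx']; simp
      simp only [f] at hvC hsC
      split_ifs at hvC hsC with h1 h2
      · simp only [Finset.mem_insert, Finset.mem_erase] at hvC
        rcases hvC with h | h
        · exact huv h.symm
        · exact hv h.2
      · apply h2
        rcases Finset.mem_insert.1 hsC with h | h
        · exfalso
          have : u ∈ insert v (a.erase w) := by rw [h]; simp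
          simp only [Finset.mem_insert, Finset.mem_erase] at this
          rcases this with h | h
          · exact huv h
          · exact hu h.2
        · obtain ⟨x, hx, hx'⟩ := Finset.mem_image.1 h
          obtain ⟨h1, h2, h3⟩ := hnb x hx
          refine down h3 ?_ (by simp)
          intro b hb
          rw [Finset.mem_insert] at hb
          rcases hb with rfl | hb
          · simp
          · have : b ∈ ({v, x} : Finset ℕ) := by
              rw [hx']; exact Finset.mem_insert_of_mem hb
            simp only [Finset.mem_insert, Finset.mem_singleton] at this ⊢
            tauto
      · exact hv hvC
    have hle := Finset.card_le_card (Finset.union_subset (Finset.image_subset_iff.2 hfB) hCB)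
    rw [Finset.card_union_of_disjoint hdisj, Finset.card_image_of_injOn hinj] at hle
    omega
  unfold g2
  omega

/-- In a complex minimal w.r.t. contraction, an edge satisfying the link condition has degree ≤ 3. -/
theorem contraction_contra {K : SComplex} (hK : InClassR K) {u v : ℕ} (huv : u ≠ v)
    (he : {u, v} ∈ K.faces) (hL : LC K u v) (hd : 4 ≤ K.deg {u, v}) : False := by
  obtain ⟨hN, _, _, _, hmin⟩ := hK
  obtain ⟨w, hw⟩ := Infinite.exists_notMem_finset K.vertexSet
  have := hmin (K.con u v w) (hN.np.con_np huv hw he hL).inp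
    (Or.inr (Or.inl (hN.np.con_contraction huv hw he hL)))
  have := con_g2 huv hw he hd
  omega



/-- hypotheses of a bistellar 2-move -/
structure BH (K : SComplex) (u v : ℕ) (τ : Finset ℕ) (K' : SComplex) : Prop where
  huv : u ≠ v
  h3 : τ.card = 3
  hu : u ∉ τ
  hv : v ∉ τ
  hτ : τ ∉ K.faces
  hp : ∀ γ, γ ⊆ τ → γ ≠ τ → insert u (insert v γ) ∈ K.faces
  hq : ∀ α ∈ K.faces, u ∈ α → v ∈ α → (∀ x ∈ α, x ≠ u → x ≠ v → x ∈ τ) ∧ ¬ τ ⊆ α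
  mem : ∀ α, α ∈ K'.faces ↔ (α ∈ K.faces ∧ ¬ (u ∈ α ∧ v ∈ α)) ∨ α = τ ∨ α = insert u τ ∨
    α = insert v τ

theorem BH.symm {K K' : SComplex} {u v : ℕ} {τ : Finset ℕ} (h : BH K u v τ K') :
    BH K v u τ K' where
  huv := h.huv.symm
  h3 := h.h3
  hu := h.hv
  hv := h.hu
  hτ := h.hτ
  hp := by intro γ h1 h2; rw [Finset.insert_comm]; exact h.hp γ h1 h2
  hq := by
    intro α h1 h2 h3
    obtain ⟨h4, h5⟩ := h.hq α h1 h3 h2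
    exact ⟨fun x a b c => h4 x a c b, h5⟩
  mem := by
    intro α; rw [h.mem α]; tauto

theorem BH.sub {K K' : SComplex} {u v : ℕ} {τ : Finset ℕ} (h : BH K u v τ K')
    {α : Finset ℕ} (hne : α.Nonempty) (hα : α ⊆ insert u τ) : α ∈ K'.faces :=
  down ((h.mem _).2 (by tauto)) hα hne

theorem BH.old {K K' : SComplex} {u v : ℕ} {τ : Finset ℕ} (h : BH K u v τ K')
    {α : Finset ℕ} (hα : α ∈ K'.faces) (hc : α.card ≤ 2) : α ∈ K.faces ∧ ¬ (u ∈ α ∧ v ∈ α) := by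
  have h3 := h.h3
  rcases (h.mem α).1 hα with h1 | rfl | rfl | rfl
  · exact h1
  · omega
  · rw [Finset.card_insert_of_notMem h.hu] at hc; omega
  · rw [Finset.card_insert_of_notMem h.hv] at hc; omega

theorem BH.ext {K K' : SComplex} {u v : ℕ} {τ : Finset ℕ} (h : BH K u v τ K') (hK : NP K)
    (s : Finset ℕ) (hs : s ∈ K'.faces) : ∃ F ∈ K'.faces, s ⊆ F ∧ F.card = 4 := by
  have hU : insert u τ ∈ K'.faces ∧ (insert u τ).card = 4 :=
    ⟨(h.mem _).2 (by tauto), by rw [Finset.card_insert_of_notMem h.hu, h.h3]⟩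
  have hV : insert v τ ∈ K'.faces ∧ (insert v τ).card = 4 :=
    ⟨(h.mem _).2 (by tauto), by rw [Finset.card_insert_of_notMem h.hv, h.h3]⟩
  rcases (h.mem s).1 hs with ⟨h1, h2⟩ | rfl | rfl | rfl
  · obtain ⟨F, hF, hsF, h4⟩ := hK.ext s h1
    by_cases hb : u ∈ F ∧ v ∈ F
    · obtain ⟨h5, h6⟩ := h.hq F hF hb.1 hb.2
      by_cases hus : u ∈ s
      · refine ⟨_, hU.1, ?_, hU.2⟩
        intro x hx
        rw [Finset.mem_insert]
        by_cases hxu : x = u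
        · exact Or.inl hxu
        · exact Or.inr (h5 x (hsF hx) hxu (by rintro rfl; exact h2 ⟨hus, hx⟩))
      · refine ⟨_, hV.1, ?_, hV.2⟩
        intro x hx
        rw [Finset.mem_insert]
        by_cases hxv : x = v
        · exact Or.inl hxv
        · exact Or.inr (h5 x (hsF hx) (by rintro rfl; exact hus hx) hxv)
    · exact ⟨F, (h.mem F).2 (Or.inl ⟨hF, hb⟩), hsF, h4⟩
  · exact ⟨_, hU.1, Finset.subset_insert _ _, hU.2⟩
  · exact ⟨_, hU.1, subset_rfl, hU.2⟩
  · exact ⟨_, hV.1, subset_rfl, hV.2⟩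

theorem BH.two_aux {K K' : SComplex} {u v : ℕ} {τ : Finset ℕ} (h : BH K u v τ K') (hK : NP K)
    (s : Finset ℕ) (hs : s ∈ K.faces) (hs3 : s.card = 3) (hus : u ∈ s) (hvs : v ∉ s)
    (hvK : insert v s ∈ K.faces) :
    ∃ y z, y ≠ z ∧ ∀ x, K'.LV s x ↔ (x = y ∨ x = z) := by
  obtain ⟨γ, huγ, rfl⟩ : ∃ γ, u ∉ γ ∧ s = insert u γ :=
    ⟨s.erase u, by simp, (Finset.insert_erase hus).symm⟩
  rw [Finset.card_insert_of_notMem huγ] at hs3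
  have hvγ : v ∉ γ := fun hh => hvs (by simp [hh])
  obtain ⟨h5, h6⟩ := h.hq _ hvK (by simp) (by simp)
  have hγτ : γ ⊆ τ := by
    intro x hx
    exact h5 x (by simp [hx]) (by rintro rfl; exact huγ hx) (by rintro rfl; exact hvγ hx)
  obtain ⟨r, hrγ, hτr⟩ : ∃ r, r ∉ γ ∧ τ = insert r γ := by
    obtain ⟨a, ha⟩ := Finset.card_eq_one.1 (show (τ \ γ).card = 1 by
      rw [Finset.card_sdiff_of_subset hγτ, h.h3]; omega)
    have ha' : a ∈ τ \ γ := by rw [ha]; simp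
    rw [Finset.mem_sdiff] at ha'
    exact ⟨a, ha'.2, by rw [← Finset.sdiff_union_of_subset hγτ, ha]; rfl⟩
  have hrτ : r ∈ τ := by rw [hτr]; simp
  have hru : r ≠ u := by rintro rfl; exact h.hu hrτ
  have hrv : r ≠ v := by rintro rfl; exact h.hv hrτ
  have hvl : K.LV (insert u γ) v := ⟨hvs, hvK⟩
  obtain ⟨z, hzv, hz, hall⟩ : ∃ z, z ≠ v ∧ K.LV (insert u γ) z ∧
      ∀ x, K.LV (insert u γ) x → x = v ∨ x = z := by
    obtain ⟨y, z, hyz, hall⟩ := hK.two _ hs (by rw [Finset.card_insert_of_notMem huγ]; omega)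
    rcases (hall v).1 hvl with rfl | rfl
    · exact ⟨z, hyz.symm, (hall z).2 (Or.inr rfl), fun x hx => (hall x).1 hx⟩
    · exact ⟨y, hyz, (hall y).2 (Or.inl rfl), fun x hx => ((hall x).1 hx).symm⟩
  have hvτ := h.hv
  have huτ := h.hu
  refine ⟨r, z, ?_, ?_⟩
  · rintro rfl
    apply h.hτ
    refine down hz.2 ?_ ⟨_, hrτ⟩
    rw [hτr]; intro x; simp; tauto
  · intro x
    constructor
    · intro hx
      rcases (h.mem _).1 hx.2 with ⟨h1, h2⟩ | h1 | h1 | h1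
      · right
        refine (hall x ⟨hx.1, h1⟩).resolve_left ?_
        rintro rfl; exact h2 (by simp)
      · exact absurd (show u ∈ τ by rw [← h1]; simp) huτ
      · left
        have hx1 := hx.1
        have : x ∈ insert u τ := by rw [← h1]; simp
        rw [hτr] at this
        simp only [Finset.mem_insert, not_or] at this hx1
        tauto
      · have : u ∈ insert v τ := by rw [← h1]; simp
        rcases Finset.mem_insert.1 this with h' | h'
        · exact absurd h' h.huv
        · exact absurd h' huτ
    · rintro (rfl | rfl)
      · refine ⟨by simp [hru, hrγ], h.sub (by simp) ?_⟩
        rw [hτr]; intro x; simp; tauto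
      · refine ⟨hz.1, (h.mem _).2 (Or.inl ⟨hz.2, ?_⟩)⟩
        rintro ⟨_, h2⟩
        rcases Finset.mem_insert.1 h2 with h' | h'
        · exact hzv h'.symm
        · exact hvs h'

theorem BH.two {K K' : SComplex} {u v : ℕ} {τ : Finset ℕ} (h : BH K u v τ K') (hK : NP K)
    (s : Finset ℕ) (hs : s ∈ K'.faces) (hs3 : s.card = 3) :
    ∃ y z, y ≠ z ∧ ∀ x, K'.LV s x ↔ (x = y ∨ x = z) := by
  have hvτ := h.hv
  have huτ := h.hu
  have hτK := h.hτ
  have hτ3 := h.h3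
  by_cases hsτ : s = τ
  · subst hsτ
    refine ⟨u, v, h.huv, fun x => ?_⟩
    constructor
    · intro hx
      rcases (h.mem _).1 hx.2 with ⟨h1, h2⟩ | h1 | h1 | h1
      · exact absurd (down h1 (Finset.subset_insert _ _) (Finset.card_pos.1 (by omega))) hτK
      · exact absurd (show x ∈ s by rw [← h1]; simp) hx.1
      · left
        have : x ∈ insert u s := by rw [← h1]; simp
        exact (Finset.mem_insert.1 this).resolve_right hx.1
      · right
        have : x ∈ insert v s := by rw [← h1]; simp
        exact (Finset.mem_insert.1 this).resolve_right hx.1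
    · rintro (rfl | rfl)
      · exact ⟨huτ, (h.mem _).2 (by tauto)⟩
      · exact ⟨hvτ, (h.mem _).2 (by tauto)⟩
  · have hsK : s ∈ K.faces ∧ ¬ (u ∈ s ∧ v ∈ s) := by
      rcases (h.mem s).1 hs with h1 | rfl | rfl | rfl
      · exact h1
      · exact absurd rfl hsτ
      · rw [Finset.card_insert_of_notMem huτ] at hs3; omega
      · rw [Finset.card_insert_of_notMem hvτ] at hs3; omega
    obtain ⟨hsK, hb⟩ := hsK
    by_cases c1 : u ∈ s ∧ insert v s ∈ K.faces
    · exact h.two_aux hK s hsK hs3 c1.1 (fun hh => hb ⟨c1.1, hh⟩) c1.2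
    by_cases c2 : v ∈ s ∧ insert u s ∈ K.faces
    · exact h.symm.two_aux hK s hsK hs3 c2.1 (fun hh => hb ⟨hh, c2.1⟩) c2.2
    obtain ⟨y, z, hyz, hall⟩ := hK.two s hsK hs3
    refine ⟨y, z, hyz, fun x => ?_⟩
    rw [← hall]
    have aux : ∀ u v, BH K u v τ K' → ¬ (u ∈ s ∧ insert v s ∈ K.faces) → x ∉ s →
        insert x s ≠ insert u τ := by
      intro u v h c1 hx he
      have hxs : x ∈ insert u τ := by rw [← he]; simp
      have hus : u ∈ insert x s := by rw [he]; simp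
      rcases Finset.mem_insert.1 hus with rfl | hus
      · apply hsτ
        rw [← Finset.erase_insert hx, he, Finset.erase_insert h.hu]
      · have hxu : x ≠ u := by rintro rfl; exact hx hus
        have hxτ := (Finset.mem_insert.1 hxs).resolve_left hxu
        apply c1
        refine ⟨hus, ?_⟩
        have := h.hp (τ.erase x) (Finset.erase_subset _ _) (by
          intro hh; rw [← hh] at hxτ; simp at hxτ)
        refine down this ?_ (by simp)
        intro b hb
        rcases Finset.mem_insert.1 hb with rfl | hb
        · simp
        · have hbx : b ≠ x := by rintro rfl; exact hx hb
          have : b ∈ insert u τ := by rw [← he]; simp [hb]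
          rcases Finset.mem_insert.1 this with rfl | this
          · simp
          · simp [hbx, this]
    constructor
    · intro hx
      refine ⟨hx.1, ?_⟩
      rcases (h.mem _).1 hx.2 with ⟨h1, h2⟩ | h1 | h1 | h1
      · exact h1
      · have : (insert x s).card = 4 := by rw [Finset.card_insert_of_notMem hx.1, hs3]
        rw [h1] at this; omega
      · exact absurd h1 (aux u v h c1 hx.1)
      · exact absurd h1 (aux v u h.symm c2 hx.1)
    · intro hx
      refine ⟨hx.1, (h.mem _).2 (Or.inl ⟨hx.2, ?_⟩)⟩
      rintro ⟨h1, h2⟩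
      rcases Finset.mem_insert.1 h1 with rfl | h1s
      · rcases Finset.mem_insert.1 h2 with h2 | h2
        · exact h.huv h2.symm
        · exact c2 ⟨h2, hx.2⟩
      · rcases Finset.mem_insert.1 h2 with h2e | h2s
        · exact c1 ⟨h1s, by rw [h2e]; exact hx.2⟩
        · exact hb ⟨h1s, h2s⟩

/-- connectivity of links of faces containing `u` -/
theorem BH.conn_b {K K' : SComplex} {u v : ℕ} {τ : Finset ℕ} (h : BH K u v τ K') (hK : NP K)
    (s : Finset ℕ) (h2 : s.card ≤ 2) (hs : s ∈ K.faces) (hus : u ∈ s) (hvs : v ∉ s) (y z : ℕ)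
    (hy : K'.LV s y) (hz : K'.LV s z) :
    Relation.ReflTransGen (K'.LA s) y z := by
  have hvτ := h.hv
  have huτ := h.hu
  have old : ∀ y, K'.LV s y → K.LV s y ∧ y ≠ v := by
    intro y hy
    rcases (h.mem _).1 hy.2 with ⟨h1, h2⟩ | h1 | h1 | h1
    · refine ⟨⟨hy.1, h1⟩, ?_⟩
      rintro rfl; exact h2 (by simp [hus])
    · exact absurd (show u ∈ τ by rw [← h1]; simp [hus]) huτ
    · have : (insert u τ).card ≤ 3 := by
        rw [← h1]; exact (Finset.card_insert_le _ _).trans (by omega)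
      rw [Finset.card_insert_of_notMem huτ, h.h3] at this; omega
    · have : (insert v τ).card ≤ 3 := by
        rw [← h1]; exact (Finset.card_insert_le _ _).trans (by omega)
      rw [Finset.card_insert_of_notMem hvτ, h.h3] at this; omega
  obtain ⟨hy1, hyv⟩ := old y hy
  obtain ⟨hz1, hzv⟩ := old z hz
  have path := hK.conn s h2 (Or.inr hs) y z hy1 hz1
  have good : ∀ a b, K.LA s a b → a ≠ v → b ≠ v → K'.LA s a b := by
    intro a b hab ha hb
    refine ⟨hab.1, hab.2.1, (h.mem _).2 (Or.inl ⟨hab.2.2, ?_⟩)⟩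
    rintro ⟨_, h2⟩
    simp only [Finset.mem_insert] at h2
    rcases h2 with h2 | h2 | h2
    exacts [ha h2.symm, hb h2.symm, hvs h2]
  by_cases hvK : insert v s ∈ K.faces
  · obtain ⟨h5, h6⟩ := h.hq _ hvK (by simp [hus]) (by simp)
    obtain ⟨r, hrτ, hr⟩ := Finset.not_subset.1 h6
    have hrv : r ≠ v := by rintro rfl; exact hr (by simp)
    have hrs : r ∉ s := fun hh => hr (by simp [hh])
    have hsτ : s ⊆ insert u τ := by
      intro x hx
      rw [Finset.mem_insert]
      by_cases hxu : x = u
      · exact Or.inl hxu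
      · exact Or.inr (h5 x (by simp [hx]) hxu (by rintro rfl; exact hvs hx))
    have star : ∀ b, b ≠ v → K.LA s v b → K'.LA s r b := by
      intro b hbv hab
      refine ⟨hrs, hab.2.1, h.sub (by simp) ?_⟩
      have hbτ := (h.hq _ hab.2.2 (by simp [hus]) (by simp)).1 b (by simp)
        (by rintro rfl; exact hab.2.1 hus) hbv
      intro x hx
      simp only [Finset.mem_insert] at hx
      rcases hx with rfl | rfl | hx
      · simp [hrτ]
      · simp [hbτ]
      · exact hsτ hx
    have := rtg_map (p := K'.LA s) (fun x => if x = v then r else x) (by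
      intro a b hab
      by_cases hav : a = v <;> by_cases hbv : b = v
      · simp only [hav, hbv]; exact Relation.ReflTransGen.refl
      · subst hav
        simp only [hbv, if_true, if_false]
        exact Relation.ReflTransGen.single (star b hbv hab)
      · subst hbv
        simp only [hav, if_true, if_false]
        exact Relation.ReflTransGen.single (star a hav hab.symm).symm
      · simp only [hav, hbv, if_false]
        exact Relation.ReflTransGen.single (good a b hab hav hbv)) path
    simpa [hyv, hzv] using this
  · refine rtg_mono ?_ path
    intro a b hab
    refine good a b hab ?_ ?_
    · rintro rfl; exact hvK hab.left.2
    · rintro rfl; exact hvK hab.right.2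

theorem BH.conn {K K' : SComplex} {u v : ℕ} {τ : Finset ℕ} (h : BH K u v τ K') (hK : NP K)
    (s : Finset ℕ) (h2 : s.card ≤ 2) (hs : s = ∅ ∨ s ∈ K'.faces) (y z : ℕ)
    (hy : K'.LV s y) (hz : K'.LV s z) :
    Relation.ReflTransGen (K'.LA s) y z := by
  have hvτ := h.hv
  have huτ := h.hu
  have hsK : s = ∅ ∨ s ∈ K.faces ∧ ¬ (u ∈ s ∧ v ∈ s) := by
    rcases hs with hs | hs
    · exact Or.inl hs
    · exact Or.inr (h.old hs h2)
  by_cases hus : u ∈ s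
  · have := hsK.resolve_left (by rintro rfl; simp at hus)
    exact h.conn_b hK s h2 this.1 hus (fun hh => this.2 ⟨hus, hh⟩) y z hy hz
  by_cases hvs : v ∈ s
  · have := hsK.resolve_left (by rintro rfl; simp at hvs)
    exact h.symm.conn_b hK s h2 this.1 hvs hus y z hy hz
  have sym : ∀ a b, K'.LA s a b → K'.LA s b a := fun a b h => h.symm
  have conn1 : ∀ u v, BH K u v τ K' → u ∉ s → ∀ x, s ⊆ τ → x ∈ τ → x ∉ s → K'.LA s u x := by
    intro u v h hus x hsτ hxτ hxs
    refine ⟨hus, hxs, h.sub (by simp) ?_⟩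
    intro a ha
    simp only [Finset.mem_insert] at ha ⊢
    rcases ha with rfl | rfl | ha
    · exact Or.inl rfl
    · exact Or.inr hxτ
    · exact Or.inr (hsτ ha)
  have lift : ∀ y, K'.LV s y → ∃ y0, K.LV s y0 ∧ Relation.ReflTransGen (K'.LA s) y y0 := by
    intro y hy
    rcases (h.mem _).1 hy.2 with ⟨h1, _⟩ | h1 | h1 | h1
    · exact ⟨y, ⟨hy.1, h1⟩, Relation.ReflTransGen.refl⟩
    · have hsτ : s ⊆ τ := by rw [← h1]; exact Finset.subset_insert _ _
      have hyτ : y ∈ τ := by rw [← h1]; simp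
      refine ⟨u, ⟨hus, ?_⟩, Relation.ReflTransGen.single (conn1 u v h hus y hsτ hyτ hy.1).symm⟩
      refine down (h.hp s hsτ (by rintro rfl; exact hy.1 hyτ)) ?_ (by simp)
      exact Finset.insert_subset_insert _ (Finset.subset_insert _ _)
    · have : (insert u τ).card ≤ 3 := by
        rw [← h1]; exact (Finset.card_insert_le _ _).trans (by omega)
      rw [Finset.card_insert_of_notMem huτ, h.h3] at this; omega
    · have : (insert v τ).card ≤ 3 := by
        rw [← h1]; exact (Finset.card_insert_le _ _).trans (by omega)
      rw [Finset.card_insert_of_notMem hvτ, h.h3] at this; omega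
  obtain ⟨y0, hy0, py⟩ := lift y hy
  obtain ⟨z0, hz0, pz⟩ := lift z hz
  refine py.trans (Relation.ReflTransGen.trans ?_ (rtg_symm sym pz))
  have hsK' : s = ∅ ∨ s ∈ K.faces := hsK.imp_right fun h => h.1
  have uvpath : insert u (insert v s) ∈ K.faces → Relation.ReflTransGen (K'.LA s) u v := by
    intro huv
    obtain ⟨h5, h6⟩ := h.hq _ huv (by simp) (by simp)
    obtain ⟨r, hrτ, hr⟩ := Finset.not_subset.1 h6
    have hrs : r ∉ s := fun hh => hr (by simp [hh])
    have hsτ : s ⊆ τ := fun x hx => h5 x (by simp [hx]) (by rintro rfl; exact hus hx)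
      (by rintro rfl; exact hvs hx)
    exact (Relation.ReflTransGen.single (conn1 u v h hus r hsτ hrτ hrs)).tail
      (conn1 v u h.symm hvs r hsτ hrτ hrs).symm
  refine rtg_map id ?_ (hK.conn s h2 hsK' y0 z0 hy0 hz0)
  intro a b hab
  by_cases hboth : u ∈ insert a (insert b s) ∧ v ∈ insert a (insert b s)
  · have h1 := hboth.1
    have h2 := hboth.2
    have huv := h.huv
    simp only [Finset.mem_insert, hus, hvs, or_false] at h1 h2
    rcases h1 with rfl | rfl
    · rcases h2 with rfl | rfl
      · exact absurd rfl huv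
      · exact uvpath hab.2.2
    · rcases h2 with rfl | rfl
      · exact rtg_symm sym (uvpath hab.symm.2.2)
      · exact absurd rfl huv
  · exact Relation.ReflTransGen.single ⟨hab.1, hab.2.1, (h.mem _).2 (Or.inl ⟨hab.2.2, hboth⟩)⟩

theorem BH.np {K K' : SComplex} {u v : ℕ} {τ : Finset ℕ} (h : BH K u v τ K') (hK : NP K) :
    NP K' where
  ne := ⟨τ, (h.mem _).2 (by tauto)⟩
  ext := h.ext hK
  card := by
    intro s hs
    rcases (h.mem s).1 hs with h1 | rfl | rfl | rfl
    · exact hK.card s h1.1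
    · rw [h.h3]; omega
    · rw [Finset.card_insert_of_notMem h.hu, h.h3]
    · rw [Finset.card_insert_of_notMem h.hv, h.h3]
  two := h.two hK
  conn := h.conn hK

theorem BH.g2_lt {K K' : SComplex} {u v : ℕ} {τ : Finset ℕ} (h : BH K u v τ K')
    (he : {u, v} ∈ K.faces) : K'.g2 < K.g2 := by
  have hf0 : K.fnum 0 ≤ K'.fnum 0 := by
    unfold fnum
    apply Finset.card_le_card
    intro s hs
    rw [Finset.mem_filter] at hs ⊢
    refine ⟨(h.mem s).2 (Or.inl ⟨hs.1, ?_⟩), hs.2⟩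
    obtain ⟨a, rfl⟩ := Finset.card_eq_one.1 hs.2
    simp only [Finset.mem_singleton]
    rintro ⟨rfl, h2⟩; exact h.huv h2.symm
  have hf1 : K'.fnum 1 < K.fnum 1 := by
    unfold fnum
    apply Finset.card_lt_card
    rw [Finset.ssubset_iff_of_subset]
    · refine ⟨{u, v}, ?_, ?_⟩
      · rw [Finset.mem_filter]; exact ⟨he, Finset.card_pair h.huv⟩
      · rw [Finset.mem_filter]
        rintro ⟨h1, h2⟩
        exact (h.old h1 (by omega)).2 (by simp)
    · intro s hs
      rw [Finset.mem_filter] at hs ⊢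
      exact ⟨(h.old hs.1 (by omega)).1, hs.2⟩
  unfold g2
  omega

/-- In class R, an edge of degree three has its link triangle filled in. -/
theorem bistellar_contra {K : SComplex} (hK : InClassR K) {u v a b c : ℕ} (huv : u ≠ v)
    (he : {u, v} ∈ K.faces) (h3 : ({a, b, c} : Finset ℕ).card = 3)
    (hu : u ∉ ({a, b, c} : Finset ℕ)) (hv : v ∉ ({a, b, c} : Finset ℕ))
    (hlk : (K.lk {u, v}).faces = properFaces {a, b, c}) : {a, b, c} ∈ K.faces := by
  by_contra hτ
  obtain ⟨hN, _, _, _, hmin⟩ := hK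
  set τ : Finset ℕ := {a, b, c} with hτdef
  have hp : ∀ γ, γ ⊆ τ → γ ≠ τ → insert u (insert v γ) ∈ K.faces := by
    intro γ h1 h2
    by_cases h0 : γ = ∅
    · subst h0; simpa using he
    · have : γ ∈ (K.lk {u, v}).faces := by
        rw [hlk, properFaces, Finset.mem_filter, Finset.mem_powerset]
        exact ⟨h1, h0, h2⟩
      have := (mem_lk.1 this).2.2
      convert this using 1
      ext; simp
  have hq : ∀ α ∈ K.faces, u ∈ α → v ∈ α → (∀ x ∈ α, x ≠ u → x ≠ v → x ∈ τ) ∧ ¬ τ ⊆ α := by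
    intro α hα h1 h2
    by_cases h0 : ((α.erase u).erase v).Nonempty
    · have : (α.erase u).erase v ∈ (K.lk {u, v}).faces := by
        rw [mem_lk]
        refine ⟨h0, by simp, ?_⟩
        convert hα using 1
        ext x
        simp only [Finset.mem_union, Finset.mem_erase, Finset.mem_insert, Finset.mem_singleton]
        by_cases hxu : x = u
        · simp [hxu, h1]
        · by_cases hxv : x = v
          · simp [hxv, h2]
          · simp [hxu, hxv]
      rw [hlk, properFaces, Finset.mem_filter, Finset.mem_powerset] at this
      obtain ⟨h3, h4, h5⟩ := this
      refine ⟨fun x hx hxu hxv => h3 (by simp [hx, hxu, hxv]), fun hh => h5 ?_⟩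
      apply Finset.Subset.antisymm h3
      intro x hx
      simp only [Finset.mem_erase]
      exact ⟨by rintro rfl; exact hv hx, by rintro rfl; exact hu hx, hh hx⟩
    · rw [Finset.not_nonempty_iff_eq_empty] at h0
      have : ∀ x ∈ α, x ≠ u → x ≠ v → False := by
        intro x hx hxu hxv
        have : x ∈ (α.erase u).erase v := by simp [hx, hxu, hxv]
        rw [h0] at this; simp at this
      refine ⟨fun x hx hxu hxv => (this x hx hxu hxv).elim, fun hh => ?_⟩
      have haτ : a ∈ τ := by simp [hτdef]
      exact this a (hh haτ) (by rintro rfl; exact hu haτ) (by rintro rfl; exact hv haτ)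
  have memiff : ∀ α, α ∈ ((K.faces.filter fun α => ¬ ({u, v} : Finset ℕ) ⊆ α) ∪
      simplexFaces (insert u τ)) ∪ simplexFaces (insert v τ) ↔
      (α ∈ K.faces ∧ ¬ (u ∈ α ∧ v ∈ α)) ∨ α = τ ∨ α = insert u τ ∨ α = insert v τ := by
    intro α
    have hsub : ({u, v} : Finset ℕ) ⊆ α ↔ (u ∈ α ∧ v ∈ α) := by
      simp [Finset.insert_subset_iff]
    have hne : τ ≠ ∅ := by rw [hτdef]; simp
    have key : ∀ u v, u ∉ τ → v ∉ τ → u ≠ v →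
        (∀ γ, γ ⊆ τ → γ ≠ τ → insert u (insert v γ) ∈ K.faces) → α ⊆ insert u τ → α ≠ ∅ →
        (α ∈ K.faces ∧ ¬ (u ∈ α ∧ v ∈ α)) ∨ α = τ ∨ α = insert u τ := by
      intro u v hu hv huv hp h1 h2
      have hvα : v ∉ α := by
        intro hh
        rcases Finset.mem_insert.1 (h1 hh) with h | h
        · exact huv h.symm
        · exact hv h
      by_cases hc : τ ⊆ α
      · by_cases huα : u ∈ α
        · right; right
          refine Finset.Subset.antisymm h1 ?_
          intro x hx
          rcases Finset.mem_insert.1 hx with rfl | hx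
          exacts [huα, hc hx]
        · right; left
          refine Finset.Subset.antisymm ?_ hc
          intro x hx
          rcases Finset.mem_insert.1 (h1 hx) with rfl | h
          exacts [absurd hx huα, h]
      · left
        refine ⟨?_, fun hh => hvα hh.2⟩
        refine K.down_closed _ (hp (α ∩ τ) Finset.inter_subset_right ?_) _ ?_ h2
        · intro hh; exact hc (by rw [← hh]; exact Finset.inter_subset_left)
        · intro x hx
          have := h1 hx
          simp only [Finset.mem_insert, Finset.mem_inter] at this ⊢
          rcases this with h | h
          · exact Or.inl h
          · exact Or.inr (Or.inr ⟨hx, h⟩)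
    simp only [Finset.mem_union, Finset.mem_filter, simplexFaces, Finset.mem_powerset, hsub]
    constructor
    · rintro ((h | ⟨h1, h2⟩) | ⟨h1, h2⟩)
      · exact Or.inl h
      · rcases key u v hu hv huv hp h1 h2 with h | h | h
        · exact Or.inl h
        · exact Or.inr (Or.inl h)
        · exact Or.inr (Or.inr (Or.inl h))
      · rcases key v u hv hu huv.symm (fun γ a b => by
          rw [Finset.insert_comm]; exact hp γ a b) h1 h2 with h | h | h
        · exact Or.inl ⟨h.1, fun hh => h.2 hh.symm⟩
        · exact Or.inr (Or.inl h)
        · exact Or.inr (Or.inr (Or.inr h))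
    · rintro (h | rfl | rfl | rfl)
      · exact Or.inl (Or.inl h)
      · exact Or.inr ⟨Finset.subset_insert _ _, hne⟩
      · exact Or.inl (Or.inr ⟨subset_rfl, by simp⟩)
      · exact Or.inr ⟨subset_rfl, by simp⟩
  let K' : SComplex :=
    { faces := ((K.faces.filter fun α => ¬ ({u, v} : Finset ℕ) ⊆ α) ∪
        simplexFaces (insert u τ)) ∪ simplexFaces (insert v τ)
      not_empty_mem := by
        simp [simplexFaces, K.not_empty_mem]
      down_closed := by
        intro s hs t hts ht
        simp only [Finset.mem_union, Finset.mem_filter, simplexFaces, Finset.mem_powerset] at hs ⊢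
        rcases hs with (h | h) | h
        · exact Or.inl (Or.inl ⟨K.down_closed s h.1 t hts ht, fun hh => h.2 (hh.trans hts)⟩)
        · exact Or.inl (Or.inr ⟨hts.trans h.1, ht⟩)
        · exact Or.inr ⟨hts.trans h.1, ht⟩ }
  have hBH : BH K u v τ K' := ⟨huv, h3, hu, hv, hτ, hp, hq, memiff⟩
  have h1 := hmin K' (hBH.np hN.np).inp
    (Or.inl ⟨u, v, a, b, c, he, huv, h3, hu, hv, hlk, hτ, rfl⟩)
  have h2 := hBH.g2_lt he
  omega



/-- A complete simplicial fan gives a homeomorphism with the sphere. -/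
theorem fan_sphere (L : SComplex) (Φ : (ℕ → ℝ) → EuclideanSpace ℝ (Fin 3))
    (ψ : EuclideanSpace ℝ (Fin 3) → (ℕ → ℝ)) (hΦc : Continuous Φ) (hψc : Continuous ψ)
    (hΦh : ∀ c : ℝ, 0 ≤ c → ∀ w, Φ (c • w) = c • Φ w)
    (hψh : ∀ c : ℝ, 0 ≤ c → ∀ x, ψ (c • x) = c • ψ x)
    (h1 : ∀ x, Φ (ψ x) = x)
    (h2 : ∀ s ∈ L.faces, ∀ w : ℕ → ℝ, (∀ v, 0 ≤ w v) → (∀ v, w v ≠ 0 → v ∈ s) → ψ (Φ w) = w)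
    (h3 : ∀ x v, 0 ≤ ψ x v)
    (h4 : ∀ x, x ≠ 0 → ∃ s ∈ L.faces, ∀ v, ψ x v ≠ 0 → v ∈ s) :
    Nonempty (↥L.realSpace ≃ₜ ↥(Metric.sphere (0 : EuclideanSpace ℝ (Fin 3)) 1)) := by
  let S : (ℕ → ℝ) → ℝ := fun w => ∑ v ∈ L.vertexSet, w v
  have hSc : Continuous S := by
    refine continuous_finsetSum _ fun v _ => continuous_apply v
  have hS : ∀ s ∈ L.faces, ∀ w : ℕ → ℝ, (∀ v, w v ≠ 0 → v ∈ s) → ∑ v ∈ s, w v = S w := by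
    intro s hs w hw
    refine Finset.sum_subset (fun v hv => mem_vertexSet_of hs hv) fun v _ hv => ?_
    by_contra h; exact hv (hw v h)
  have hSh : ∀ (c : ℝ) w, S (c • w) = c * S w := by
    intro c w; simp [S, Finset.mul_sum]
  have hψ0 : ψ 0 = 0 := by simpa using hψh 0 le_rfl 0
  have hΦ0 : Φ 0 = 0 := by simpa using hΦh 0 le_rfl 0
  have a1 : ∀ w : L.realSpace, ψ (Φ w.1) = w.1 ∧ S w.1 = 1 := by
    rintro ⟨w, hw, s, hs, hsw, hsum⟩
    exact ⟨h2 s hs w hw hsw, by rw [← hS s hs w hsw, hsum]⟩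
  have a2 : ∀ w : L.realSpace, Φ w.1 ≠ 0 := by
    intro w h
    have h5 := (a1 w).1
    rw [h, hψ0] at h5
    have h6 := (a1 w).2
    rw [← h5] at h6
    simp [S] at h6
  have a3 : ∀ x : Metric.sphere (0 : EuclideanSpace ℝ (Fin 3)) 1, x.1 ≠ 0 ∧ ‖x.1‖ = 1 := by
    intro x
    have : ‖x.1‖ = 1 := by simpa using x.2
    exact ⟨by intro h; rw [h] at this; simp at this, this⟩
  have a4 : ∀ x, x ≠ 0 → 0 < S (ψ x) := by
    intro x hx
    obtain ⟨s, hs, hsx⟩ := h4 x hx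
    refine lt_of_le_of_ne (Finset.sum_nonneg fun v _ => h3 x v) fun h => hx ?_
    have h5 := (Finset.sum_eq_zero_iff_of_nonneg (fun v _ => h3 x v)).1 h.symm
    have : ψ x = 0 := by
      funext v
      by_contra hv
      exact hv (h5 v (mem_vertexSet_of hs (hsx v hv)))
    rw [← h1 x, this, hΦ0]
  refine ⟨{ toFun := fun w => ⟨‖Φ w.1‖⁻¹ • Φ w.1, ?_⟩
            invFun := fun x => ⟨(S (ψ x.1))⁻¹ • ψ x.1, ?_⟩
            left_inv := ?_
            right_inv := ?_
            continuous_toFun := ?_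
            continuous_invFun := ?_ }⟩
  · simp [norm_smul, a2 w]
  · have hp := a4 x.1 (a3 x).1
    obtain ⟨s, hs, hsx⟩ := h4 x.1 (a3 x).1
    have hh : ∀ v, ((S (ψ x.1))⁻¹ • ψ x.1) v ≠ 0 → v ∈ s := by
      intro v hv; apply hsx; intro h; apply hv; simp [h]
    refine ⟨fun v => ?_, s, hs, hh, ?_⟩
    · have := h3 x.1 v
      simp only [Pi.smul_apply, smul_eq_mul]; positivity
    · rw [hS s hs _ hh, hSh]; exact inv_mul_cancel₀ hp.ne'
  · intro w
    apply Subtype.ext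
    have hn : ‖Φ w.1‖ ≠ 0 := by simpa using a2 w
    simp only
    rw [hψh _ (by positivity), (a1 w).1, hSh, (a1 w).2, smul_smul]
    simp [hn]
  · intro x
    apply Subtype.ext
    have hp := a4 x.1 (a3 x).1
    simp only
    rw [hΦh _ (by positivity), h1, norm_smul, (a3 x).2, smul_smul]
    simp [abs_of_pos hp, hp.ne']
  · refine Continuous.subtype_mk ?_ _
    have c1 : Continuous fun w : L.realSpace => Φ w.1 := hΦc.comp continuous_subtype_val
    have c2 : Continuous fun w : L.realSpace => ‖Φ w.1‖⁻¹ :=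
      c1.norm.inv₀ fun w => by simpa using a2 w
    exact c2.smul c1
  · refine Continuous.subtype_mk ?_ _
    have c1 : Continuous fun x : Metric.sphere (0 : EuclideanSpace ℝ (Fin 3)) 1 => ψ x.1 :=
      hψc.comp continuous_subtype_val
    have c2 : Continuous fun x : Metric.sphere (0 : EuclideanSpace ℝ (Fin 3)) 1 =>
        (S (ψ x.1))⁻¹ := (hSc.comp c1).inv₀ fun x => (a4 x.1 (a3 x).1).ne'
    exact c2.smul c1

theorem tetra_sphere (L : SComplex) (a b c d : ℕ) (hab : a ≠ b) (hac : a ≠ c) (had : a ≠ d)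
    (hbc : b ≠ c) (hbd : b ≠ d) (hcd : c ≠ d)
    (hsub : ∀ s ∈ L.faces, a ∉ s ∨ b ∉ s ∨ c ∉ s ∨ d ∉ s)
    (hv : ∀ s ∈ L.faces, s ⊆ {a, b, c, d})
    (ha : {b, c, d} ∈ L.faces) (hb : {a, c, d} ∈ L.faces) (hc : {a, b, d} ∈ L.faces)
    (hd : {a, b, c} ∈ L.faces) :
    Nonempty (↥L.realSpace ≃ₜ ↥(Metric.sphere (0 : EuclideanSpace ℝ (Fin 3)) 1)) := by
  let m : EuclideanSpace ℝ (Fin 3) → ℝ := fun x => min (min (x 0) (x 1)) (min (x 2) 0)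
  refine fan_sphere L (fun w => !₂[w a - w d, w b - w d, w c - w d])
    (fun x v => if v = a then x 0 - m x else if v = b then x 1 - m x else if v = c then x 2 - m x
      else if v = d then - m x else 0) ?_ ?_ ?_ ?_ ?_ ?_ ?_ ?_
  · refine (PiLp.continuous_toLp 2 _).comp ?_
    refine continuous_pi fun i => ?_
    fin_cases i <;> simp <;> fun_prop
  · refine continuous_pi fun v => ?_
    simp only [m]
    split_ifs <;> fun_prop
  · intro k hk w
    ext i
    fin_cases i <;> simp <;> ring
  · intro k hk x
    funext v
    have : m (k • x) = k * m x := by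
      simp only [m, PiLp.smul_apply, smul_eq_mul]
      rw [mul_min_of_nonneg _ _ hk, mul_min_of_nonneg _ _ hk, mul_min_of_nonneg _ _ hk, mul_zero]
    simp only [this, Pi.smul_apply, PiLp.smul_apply, smul_eq_mul]
    split_ifs <;> ring
  · intro x
    ext i
    fin_cases i <;> simp [hab, hac, had, hbc, hbd, hcd, hab.symm, hac.symm, had.symm, hbc.symm,
      hbd.symm, hcd.symm]
  · intro s hs w hw hws
    have hm : m !₂[w a - w d, w b - w d, w c - w d] = - w d := by
      simp only [m]
      have e : ∀ v, v ∉ s → w v = 0 := fun v hvs => by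
        by_contra h; exact hvs (hws v h)
      have := hw a
      have := hw b
      have := hw c
      have := hw d
      simp
      rcases hsub s hs with h | h | h | h <;> have h0 := e _ h <;>
        simp only [min_def] <;> split_ifs <;> linarith
    funext v
    simp only [hm]
    simp
    split_ifs with g1 g2 g3 g4
    · rw [g1]
    · rw [g2]
    · rw [g3]
    · rw [g4]
    · by_contra h
      have := hv s hs (hws v (Ne.symm h))
      simp [g1, g2, g3, g4] at this
  · intro x v
    have e0 : m x ≤ x 0 := by simp [m]
    have e1 : m x ≤ x 1 := by simp [m]
    have e2 : m x ≤ x 2 := by simp [m]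
    have e3 : m x ≤ 0 := by simp [m]
    simp only
    split_ifs <;> linarith
  · intro x _
    have : m x = x 0 ∨ m x = x 1 ∨ m x = x 2 ∨ m x = 0 := by
      simp only [m, min_def]; split_ifs <;> simp
    rcases this with h | h | h | h
    · refine ⟨_, ha, fun v => ?_⟩
      simp only [h]; split_ifs <;> simp [*]
    · refine ⟨_, hb, fun v => ?_⟩
      simp only [h]; split_ifs <;> simp [*]
    · refine ⟨_, hc, fun v => ?_⟩
      simp only [h]; split_ifs <;> simp [*]
    · refine ⟨_, hd, fun v => ?_⟩
      simp only [h]; split_ifs <;> simp [*]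


set_option maxHeartbeats 4000000 in
theorem octa_sphere (L : SComplex) (p q a b c d : ℕ) (hpq : p ≠ q) (hpa : p ≠ a) (hpb : p ≠ b)
    (hpc : p ≠ c) (hpd : p ≠ d) (hqa : q ≠ a) (hqb : q ≠ b) (hqc : q ≠ c) (hqd : q ≠ d)
    (hab : a ≠ b) (hac : a ≠ c) (had : a ≠ d) (hbc : b ≠ c) (hbd : b ≠ d) (hcd : c ≠ d)
    (n1 : ∀ s ∈ L.faces, p ∉ s ∨ q ∉ s) (n2 : ∀ s ∈ L.faces, a ∉ s ∨ c ∉ s)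
    (n3 : ∀ s ∈ L.faces, b ∉ s ∨ d ∉ s)
    (hv : ∀ s ∈ L.faces, s ⊆ {p, q, a, b, c, d})
    (h1 : {p, a, b} ∈ L.faces) (h2 : {p, b, c} ∈ L.faces) (h3 : {p, c, d} ∈ L.faces)
    (h4 : {p, d, a} ∈ L.faces) (h5 : {q, a, b} ∈ L.faces) (h6 : {q, b, c} ∈ L.faces)
    (h7 : {q, c, d} ∈ L.faces) (h8 : {q, d, a} ∈ L.faces) :
    Nonempty (↥L.realSpace ≃ₜ ↥(Metric.sphere (0 : EuclideanSpace ℝ (Fin 3)) 1)) := by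
  refine fan_sphere L (fun w => !₂[w a - w c, w b - w d, w p - w q])
    (fun x v => if v = a then max (x 0) 0 else if v = c then max (-x 0) 0 else
      if v = b then max (x 1) 0 else if v = d then max (-x 1) 0 else
      if v = p then max (x 2) 0 else if v = q then max (-x 2) 0 else 0) ?_ ?_ ?_ ?_ ?_ ?_ ?_ ?_
  · refine (PiLp.continuous_toLp 2 _).comp ?_
    refine continuous_pi fun i => ?_
    fin_cases i <;> simp <;> fun_prop
  · refine continuous_pi fun v => ?_
    split_ifs <;> fun_prop
  · intro k hk w
    ext i
    fin_cases i <;> simp <;> ring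
  · intro k hk x
    funext v
    have e : ∀ r : ℝ, max (k * r) 0 = k * max r 0 := by
      intro r; rw [mul_max_of_nonneg _ _ hk, mul_zero]
    have e' : ∀ r : ℝ, max (-(k * r)) 0 = k * max (-r) 0 := by
      intro r; rw [← e, mul_neg]
    simp only [Pi.smul_apply, PiLp.smul_apply, smul_eq_mul, e, e']
    split_ifs <;> ring
  · intro x
    have e : ∀ r : ℝ, max r 0 - max (-r) 0 = r := by
      intro r; simp only [max_def]; split_ifs <;> linarith
    ext i
    fin_cases i <;> simp [e, hpa, hpb, hpc, hpd, hqa, hqb, hqc, hqd, hab.symm, hac.symm,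
      had.symm, hbc, hbd.symm, hcd.symm, hpq.symm]
  · intro s hs w hw hws
    have e : ∀ v, v ∉ s → w v = 0 := fun v hvs => by
      by_contra h; exact hvs (hws v h)
    have key : ∀ u v, (u ∉ s ∨ v ∉ s) →
        max (w u - w v) 0 = w u ∧ max (-(w u - w v)) 0 = w v := by
      intro u v h
      have := hw u
      have := hw v
      rcases h with h | h <;> have h0 := e _ h <;> simp only [max_def] <;> constructor <;>
        split_ifs <;> linarith
    funext v
    have k1 := key p q (n1 s hs)
    have k2 := key a c (n2 s hs)
    have k3 := key b d (n3 s hs)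
    change (if v = a then max (w a - w c) 0 else if v = c then max (-(w a - w c)) 0 else
      if v = b then max (w b - w d) 0 else if v = d then max (-(w b - w d)) 0 else
      if v = p then max (w p - w q) 0 else if v = q then max (-(w p - w q)) 0 else 0) = w v
    rw [k1.1, k1.2, k2.1, k2.2, k3.1, k3.2]
    split_ifs with g1 g2 g3 g4 g5 g6
    · rw [g1]
    · rw [g2]
    · rw [g3]
    · rw [g4]
    · rw [g5]
    · rw [g6]
    · by_contra h
      have := hv s hs (hws v (Ne.symm h))
      simp [g1, g2, g3, g4, g5, g6] at this
  · intro x v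
    simp only
    split_ifs <;> simp
  · intro x _
    have e : ∀ r : ℝ, max r 0 = 0 ∨ max (-r) 0 = 0 := by
      intro r; rcases le_total r 0 with h | h
      · left; simpa using h
      · right; simpa using h
    rcases e (x 0) with k1 | k1 <;> rcases e (x 1) with k2 | k2 <;> rcases e (x 2) with k3 | k3
    · refine ⟨_, h7, fun v => ?_⟩
      simp only [k1, k2, k3]; split_ifs <;> simp [*]
    · refine ⟨_, h3, fun v => ?_⟩
      simp only [k1, k2, k3]; split_ifs <;> simp [*]
    · refine ⟨_, h6, fun v => ?_⟩
      simp only [k1, k2, k3]; split_ifs <;> simp [*]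
    · refine ⟨_, h2, fun v => ?_⟩
      simp only [k1, k2, k3]; split_ifs <;> simp [*]
    · refine ⟨_, h8, fun v => ?_⟩
      simp only [k1, k2, k3]; split_ifs <;> simp [*]
    · refine ⟨_, h4, fun v => ?_⟩
      simp only [k1, k2, k3]; split_ifs <;> simp [*]
    · refine ⟨_, h5, fun v => ?_⟩
      simp only [k1, k2, k3]; split_ifs <;> simp [*]
    · refine ⟨_, h1, fun v => ?_⟩
      simp only [k1, k2, k3]; split_ifs <;> simp [*]

set_option maxHeartbeats 4000000 in
theorem penta_sphere (L : SComplex) (p q a b c d f : ℕ) (hpq : p ≠ q)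
    (hpa : p ≠ a) (hpb : p ≠ b) (hpc : p ≠ c) (hpd : p ≠ d) (hpf : p ≠ f)
    (hqa : q ≠ a) (hqb : q ≠ b) (hqc : q ≠ c) (hqd : q ≠ d) (hqf : q ≠ f)
    (hab : a ≠ b) (hac : a ≠ c) (had : a ≠ d) (haf : a ≠ f) (hbc : b ≠ c) (hbd : b ≠ d)
    (hbf : b ≠ f) (hcd : c ≠ d) (hcf : c ≠ f) (hdf : d ≠ f)
    (n1 : ∀ s ∈ L.faces, p ∉ s ∨ q ∉ s) (n2 : ∀ s ∈ L.faces, a ∉ s ∨ c ∉ s)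
    (n3 : ∀ s ∈ L.faces, b ∉ s ∨ d ∉ s) (n4 : ∀ s ∈ L.faces, c ∉ s ∨ f ∉ s)
    (n5 : ∀ s ∈ L.faces, d ∉ s ∨ a ∉ s) (n6 : ∀ s ∈ L.faces, f ∉ s ∨ b ∉ s)
    (hv : ∀ s ∈ L.faces, s ⊆ {p, q, a, b, c, d, f})
    (h1 : {p, a, b} ∈ L.faces) (h2 : {p, b, c} ∈ L.faces) (h3 : {p, c, d} ∈ L.faces)
    (h4 : {p, d, f} ∈ L.faces) (h5 : {p, f, a} ∈ L.faces)
    (h6 : {q, a, b} ∈ L.faces) (h7 : {q, b, c} ∈ L.faces) (h8 : {q, c, d} ∈ L.faces)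
    (h9 : {q, d, f} ∈ L.faces) (h10 : {q, f, a} ∈ L.faces) :
    Nonempty (↥L.realSpace ≃ₜ ↥(Metric.sphere (0 : EuclideanSpace ℝ (Fin 3)) 1)) := by
  let M : ℝ → ℝ → ℝ := fun x y => max 0 (min x y)
  have hM : ∀ x y : ℝ, (0 ≤ x ∧ 0 ≤ y ∧ x ≤ y ∧ M x y = x) ∨ (0 ≤ x ∧ 0 ≤ y ∧ y ≤ x ∧ M x y = y) ∨
      ((x ≤ 0 ∧ 0 ≤ y ∨ x ≤ 0 ∧ y ≤ 0 ∨ 0 ≤ x ∧ y ≤ 0) ∧ M x y = 0) := by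
    intro x y
    rcases le_total 0 x with hx | hx <;> rcases le_total 0 y with hy | hy
    · rcases le_total x y with hxy | hxy
      · left; simp [M, *]
      · right; left; simp [M, *]
    · right; right; refine ⟨Or.inr (Or.inr ⟨hx, hy⟩), ?_⟩; simp [M, hy]
    · right; right; refine ⟨Or.inl ⟨hx, hy⟩, ?_⟩; simp [M, hx]
    · right; right; refine ⟨Or.inr (Or.inl ⟨hx, hy⟩), ?_⟩; simp [M, hx]
  refine fan_sphere L (fun w => !₂[w a + w b - w d, w b + w c - w f, w p - w q])
    (fun x v => if v = a then max (x 0 - M (x 0) (x 1)) 0 else if v = b then M (x 0) (x 1) else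
      if v = c then max (x 1 - M (x 0) (x 1)) 0 else
      if v = d then max (-x 0) 0 else if v = f then max (-x 1) 0 else
      if v = p then max (x 2) 0 else if v = q then max (-x 2) 0 else 0) ?_ ?_ ?_ ?_ ?_ ?_ ?_ ?_
  · refine (PiLp.continuous_toLp 2 _).comp ?_
    refine continuous_pi fun i => ?_
    fin_cases i <;> simp <;> fun_prop
  · refine continuous_pi fun v => ?_
    simp only [M]
    split_ifs <;> fun_prop
  · intro k hk w
    ext i
    fin_cases i <;> simp <;> ring
  · intro k hk x
    funext v
    have e : ∀ r : ℝ, max (k * r) 0 = k * max r 0 := by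
      intro r; rw [mul_max_of_nonneg _ _ hk, mul_zero]
    have e' : ∀ r : ℝ, max (-(k * r)) 0 = k * max (-r) 0 := by
      intro r; rw [← e, mul_neg]
    have e2 : ∀ r s : ℝ, M (k * r) (k * s) = k * M r s := by
      intro r s; simp only [M]
      rw [mul_max_of_nonneg _ _ hk, mul_min_of_nonneg _ _ hk, mul_zero]
    simp only [Pi.smul_apply, PiLp.smul_apply, smul_eq_mul, e2, ← mul_sub, e, e']
    split_ifs <;> ring
  · intro x
    have e : ∀ r : ℝ, max r 0 - max (-r) 0 = r := by
      intro r; simp only [max_def]; split_ifs <;> linarith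
    have e1 : max (x 0 - M (x 0) (x 1)) 0 + M (x 0) (x 1) - max (-x 0) 0 = x 0 := by
      clear_value M
      rcases hM (x 0) (x 1) with ⟨u1, u2, u3, u4⟩ | ⟨u1, u2, u3, u4⟩ |
        ⟨⟨u1, u2⟩ | ⟨u1, u2⟩ | ⟨u1, u2⟩, u4⟩ <;> rw [u4] <;> simp only [max_def] <;>
        split_ifs <;> linarith
    have e2 : M (x 0) (x 1) + max (x 1 - M (x 0) (x 1)) 0 - max (-x 1) 0 = x 1 := by
      clear_value M
      rcases hM (x 0) (x 1) with ⟨u1, u2, u3, u4⟩ | ⟨u1, u2, u3, u4⟩ |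
        ⟨⟨u1, u2⟩ | ⟨u1, u2⟩ | ⟨u1, u2⟩, u4⟩ <;> rw [u4] <;> simp only [max_def] <;>
        split_ifs <;> linarith
    ext i
    fin_cases i <;> simp [e, e1, e2, hpa, hpb, hpc, hpd, hpf, hqa, hqb, hqc, hqd, hqf, hab.symm,
      hac.symm, had.symm, haf.symm, hbc.symm, hbd.symm, hbf.symm, hcd.symm, hcf.symm, hdf.symm,
      hpq.symm]
  · intro s hs w hw hws
    have e : ∀ v, v ∉ s → w v = 0 := fun v hvs => by
      by_contra h; exact hvs (hws v h)
    have key : max (w p - w q) 0 = w p ∧ max (-(w p - w q)) 0 = w q := by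
      have := hw p
      have := hw q
      rcases n1 s hs with h | h <;> have h0 := e _ h <;> simp only [max_def] <;> constructor <;>
        split_ifs <;> linarith
    have ka := hw a
    have kb := hw b
    have kc := hw c
    have kd := hw d
    have kf := hw f
    have m2 : w a = 0 ∨ w c = 0 := (n2 s hs).imp (e _) (e _)
    have m3 : w b = 0 ∨ w d = 0 := (n3 s hs).imp (e _) (e _)
    have m4 : w c = 0 ∨ w f = 0 := (n4 s hs).imp (e _) (e _)
    have m5 : w d = 0 ∨ w a = 0 := (n5 s hs).imp (e _) (e _)
    have m6 : w f = 0 ∨ w b = 0 := (n6 s hs).imp (e _) (e _)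
    have kM : M (w a + w b - w d) (w b + w c - w f) = w b := by
      simp only [M, max_def, min_def]
      clear hM key e hws n1 n2 n3 n4 n5 n6
      rcases m2 with m2 | m2 <;> rcases m3 with m3 | m3 <;> rcases m4 with m4 | m4 <;>
        rcases m5 with m5 | m5 <;> rcases m6 with m6 | m6 <;> split_ifs <;> linarith
    have l1 : max (w a + w b - w d - w b) 0 = w a := by
      rcases m5 with h | h <;> simp only [max_def] <;> split_ifs <;> linarith
    have l2 : max (w b + w c - w f - w b) 0 = w c := by
      rcases m4 with h | h <;> simp only [max_def] <;> split_ifs <;> linarith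
    have l3 : max (-(w a + w b - w d)) 0 = w d := by
      rcases m3 with h | h <;> rcases m5 with h' | h' <;> simp only [max_def] <;> split_ifs <;>
        linarith
    have l4 : max (-(w b + w c - w f)) 0 = w f := by
      rcases m4 with h | h <;> rcases m6 with h' | h' <;> simp only [max_def] <;> split_ifs <;>
        linarith
    funext v
    change (if v = a then max (w a + w b - w d - M (w a + w b - w d) (w b + w c - w f)) 0 else
      if v = b then M (w a + w b - w d) (w b + w c - w f) else
      if v = c then max (w b + w c - w f - M (w a + w b - w d) (w b + w c - w f)) 0 else
      if v = d then max (-(w a + w b - w d)) 0 else if v = f then max (-(w b + w c - w f)) 0 else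
      if v = p then max (w p - w q) 0 else if v = q then max (-(w p - w q)) 0 else 0) = w v
    rw [kM, l1, l2, l3, l4, key.1, key.2]
    split_ifs with g1 g2 g3 g4 g5 g6 g7
    · rw [g1]
    · rw [g2]
    · rw [g3]
    · rw [g4]
    · rw [g5]
    · rw [g6]
    · rw [g7]
    · by_contra h
      have := hv s hs (hws v (Ne.symm h))
      simp [g1, g2, g3, g4, g5, g6, g7] at this
  · intro x v
    simp only
    split_ifs <;> simp [M]
  · intro x _
    have e : ∀ r : ℝ, max r 0 = 0 ∨ max (-r) 0 = 0 := by
      intro r; rcases le_total r 0 with h | h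
      · left; simpa using h
      · right; simpa using h
    rcases e (x 2) with k3 | k3 <;>
      rcases hM (x 0) (x 1) with ⟨u1, u2, u3, u4⟩ | ⟨u1, u2, u3, u4⟩ |
        ⟨⟨u1, u2⟩ | ⟨u1, u2⟩ | ⟨u1, u2⟩, u4⟩
    · refine ⟨_, h7, fun v => ?_⟩
      simp only [u4, k3]; split_ifs <;> simp [*]
    · refine ⟨_, h6, fun v => ?_⟩
      simp only [u4, k3]; split_ifs <;> simp [*]
    · refine ⟨_, h8, fun v => ?_⟩
      simp only [u4, k3]; split_ifs <;> simp [*]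
    · refine ⟨_, h9, fun v => ?_⟩
      simp only [u4, k3]; split_ifs <;> simp [*]
    · refine ⟨_, h10, fun v => ?_⟩
      simp only [u4, k3]; split_ifs <;> simp [*]
    · refine ⟨_, h2, fun v => ?_⟩
      simp only [u4, k3]; split_ifs <;> simp [*]
    · refine ⟨_, h1, fun v => ?_⟩
      simp only [u4, k3]; split_ifs <;> simp [*]
    · refine ⟨_, h3, fun v => ?_⟩
      simp only [u4, k3]; split_ifs <;> simp [*]
    · refine ⟨_, h4, fun v => ?_⟩
      simp only [u4, k3]; split_ifs <;> simp [*]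
    · refine ⟨_, h5, fun v => ?_⟩
      simp only [u4, k3]; split_ifs <;> simp [*]


/-- Abstract closed connected surface with at most seven vertices, given by its triangles. -/
structure Surf (T : ℕ → ℕ → ℕ → Prop) (V : Finset ℕ) : Prop where
  r : ∀ {x y z}, T x y z → T y z x
  s : ∀ {x y z}, T x y z → T y x z
  ne : ∀ {x y z}, T x y z → x ≠ y
  mem : ∀ {x y z}, T x y z → x ∈ V
  ex : ∀ x ∈ V, ∃ y z, T x y z
  two : ∀ {x y z}, T x y z → ∃ w, w ≠ z ∧ T x y w ∧ ∀ u, T x y u → u = z ∨ u = w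
  lkc : ∀ a (C : ℕ → Prop), (∃ c z, C c ∧ T a c z) → (∀ c z, C c → T a c z → C z) →
    ∀ c z, T a c z → C c
  conn : ∀ C : ℕ → Prop, (∃ c ∈ V, C c) → (∀ c y z, C c → T c y z → C y) → ∀ c ∈ V, C c
  no3 : ∀ {a b c d}, T a b c → T a c d → T a d b → False
  nofull : ∀ a ∈ V, ∃ b ∈ V, b ≠ a ∧ ∀ z, ¬ T a b z
  card : V.card ≤ 7

namespace Surf

variable {T : ℕ → ℕ → ℕ → Prop} {V : Finset ℕ}

theorem rr (S : Surf T V) {x y z} (h : T x y z) : T z x y := S.r (S.r h)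
theorem rev (S : Surf T V) {x y z} (h : T x y z) : T z y x := S.s (S.r h)
theorem t (S : Surf T V) {x y z} (h : T x y z) : T x z y := S.r (S.s h)
theorem ne2 (S : Surf T V) {x y z} (h : T x y z) : y ≠ z := S.ne (S.r h)
theorem ne3 (S : Surf T V) {x y z} (h : T x y z) : x ≠ z := S.ne (S.t h)

theorem uniq (S : Surf T V) {x y z w u} (h1 : T x y z) (h2 : T x y w) (hzw : z ≠ w)
    (h : T x y u) : u = z ∨ u = w := by
  obtain ⟨w', hw, h3, h4⟩ := S.two h1
  rcases h4 w h2 with h5 | h5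
  · exact absurd h5.symm hzw
  · subst h5; exact h4 u h

/-- link of `a` is a 4-cycle -/
structure C4 (T : ℕ → ℕ → ℕ → Prop) (a b c d e : ℕ) : Prop where
  h1 : T a b c
  h2 : T a c d
  h3 : T a d e
  h4 : T a e b
  n1 : b ≠ d
  n2 : c ≠ e

theorem C4.nbr {a b c d e : ℕ} (h : C4 T a b c d e) (S : Surf T V) {y z} (hy : T a y z) :
    y = b ∨ y = c ∨ y = d ∨ y = e := by
  refine S.lkc a (fun y => y = b ∨ y = c ∨ y = d ∨ y = e) ⟨b, c, by simp, h.h1⟩ ?_ y z hy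
  rintro x z (rfl | rfl | rfl | rfl) hxz
  · rcases S.uniq h.h1 (S.t h.h4) h.n2 hxz with h | h <;> simp [h]
  · rcases S.uniq h.h2 (S.t h.h1) h.n1.symm hxz with h | h <;> simp [h]
  · rcases S.uniq h.h3 (S.t h.h2) h.n2.symm hxz with h | h <;> simp [h]
  · rcases S.uniq h.h4 (S.t h.h3) h.n1 hxz with h | h <;> simp [h]

/-- `a` has as link the 5-cycle `b c d e f`, with `q` the remaining vertex -/
structure C5 (T : ℕ → ℕ → ℕ → Prop) (V : Finset ℕ) (a q b c d e f : ℕ) : Prop where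
  h1 : T a b c
  h2 : T a c d
  h3 : T a d e
  h4 : T a e f
  h5 : T a f b
  n1 : b ≠ d
  n2 : c ≠ e
  n3 : d ≠ f
  n4 : e ≠ b
  n5 : f ≠ c
  qa : q ≠ a
  qb : q ≠ b
  qc : q ≠ c
  qd : q ≠ d
  qe : q ≠ e
  qf : q ≠ f
  hq : ∀ z, ¬ T a q z
  qV : q ∈ V
  hV : ∀ v ∈ V, v = a ∨ v = b ∨ v = c ∨ v = d ∨ v = e ∨ v = f ∨ v = q

theorem C5.rot {a q b c d e f : ℕ} (h : C5 T V a q b c d e f) : C5 T V a q c d e f b where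
  h1 := h.h2
  h2 := h.h3
  h3 := h.h4
  h4 := h.h5
  h5 := h.h1
  n1 := h.n2
  n2 := h.n3
  n3 := h.n4
  n4 := h.n5
  n5 := h.n1
  qa := h.qa
  qb := h.qc
  qc := h.qd
  qd := h.qe
  qe := h.qf
  qf := h.qb
  hq := h.hq
  qV := h.qV
  hV := fun v hv => by rcases h.hV v hv with h | h | h | h | h | h | h <;> simp [h]

theorem cyc (S : Surf T V) {a : ℕ} (ha : a ∈ V) :
    (∃ b c d e, C4 T a b c d e) ∨ ∃ q b c d e f, C5 T V a q b c d e f := by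
  obtain ⟨b, c, hbc⟩ := S.ex a ha
  obtain ⟨d, hdc, hbd, hb⟩ := S.two hbc
  obtain ⟨e, heb, hce, hc⟩ := S.two (S.t hbc)
  obtain ⟨f, hfb, hdf, hd⟩ := S.two (S.t hbd)
  have ncd : ¬ T a c d := fun h => S.no3 hbc h (S.t hbd)
  have hed : e ≠ d := by rintro rfl; exact ncd hce
  have hfc : f ≠ c := by rintro rfl; exact ncd (S.t hdf)
  by_cases hef : e = f
  · subst hef
    left
    exact ⟨b, c, e, d, hbc, hce, S.t hdf, S.t hbd, heb.symm, hdc.symm⟩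
  right
  obtain ⟨q, hqV, hqa, hq⟩ := S.nofull a ha
  have qb : q ≠ b := by rintro rfl; exact hq _ hbc
  have qc : q ≠ c := by rintro rfl; exact hq _ hce
  have qd : q ≠ d := by rintro rfl; exact hq _ hdf
  have qe : q ≠ e := by rintro rfl; exact hq _ (S.t hce)
  have qf : q ≠ f := by rintro rfl; exact hq _ (S.t hdf)
  have ab := S.ne hbc
  have ac := S.ne3 hbc
  have ad := S.ne3 hbd
  have ae := S.ne3 hce
  have af := S.ne3 hdf
  have bc := S.ne2 hbc
  have bd := S.ne2 hbd
  have ce := S.ne2 hce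
  have df := S.ne2 hdf
  have hV : ∀ v ∈ V, v = a ∨ v = b ∨ v = c ∨ v = e ∨ v = f ∨ v = d ∨ v = q := by
    have hsub : ({a, b, c, e, f, d, q} : Finset ℕ) ⊆ V := by
      intro v hv
      simp only [Finset.mem_insert, Finset.mem_singleton] at hv
      rcases hv with rfl | rfl | rfl | rfl | rfl | rfl | rfl
      · exact ha
      · exact S.mem (S.s hbc)
      · exact S.mem (S.s hce)
      · exact S.mem (S.rr hce)
      · exact S.mem (S.rr hdf)
      · exact S.mem (S.s hdf)
      · exact hqV
    have hcard : ({a, b, c, e, f, d, q} : Finset ℕ).card = 7 := by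
      rw [Finset.card_insert_of_notMem, Finset.card_insert_of_notMem, Finset.card_insert_of_notMem,
        Finset.card_insert_of_notMem, Finset.card_insert_of_notMem, Finset.card_insert_of_notMem,
        Finset.card_singleton]
      · simp [qd.symm]
      · simp [qf.symm, df.symm]
      · simp [qe.symm, hef, hed]
      · simp [qc.symm, ce, hfc.symm, hdc.symm]
      · simp [qb.symm, bc, heb.symm, hfb.symm, bd]
      · simp [ab, ac, ae, af, ad, hqa.symm]
    have heq := Finset.eq_of_subset_of_card_le hsub (by rw [hcard]; exact S.card)
    intro v hv
    rw [← heq] at hv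
    simpa using hv
  obtain ⟨g, hgc, heg, he⟩ := S.two (S.t hce)
  have hgf : g = f := by
    rcases hV g (S.mem (S.rr heg)) with h | h | h | h | h | h | h
    · exact absurd h.symm (S.ne3 heg)
    · subst h
      rcases hb e (S.t heg) with h | h
      · exact absurd h ce.symm
      · exact absurd h hed
    · exact absurd h hgc
    · exact absurd h.symm (S.ne2 heg)
    · exact h
    · subst h
      rcases hd e (S.t heg) with h | h
      · exact absurd h heb
      · exact absurd h hef
    · subst h; exact absurd (S.t heg) (hq _)
  subst hgf
  exact ⟨q, b, c, e, g, d, ⟨hbc, hce, heg, S.t hdf, S.t hbd, heb.symm, hfc.symm, hed, hfb, hdc, hqa,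
    qb, qc, qe, qf, qd, hq, hqV, hV⟩⟩

theorem C5.third {a q b c d e f : ℕ} (h : C5 T V a q b c d e f) (S : Surf T V) :
    T b c q ∨ T b c e := by
  obtain ⟨w, hwa, hw, -⟩ := S.two (S.r h.h1)
  rcases h.hV w (S.mem (S.rr hw)) with e | e | e | e | e | e | e
  · exact absurd e hwa
  · exact absurd e.symm (S.ne3 hw)
  · exact absurd e.symm (S.ne2 hw)
  · subst e
    exact (S.no3 (a := c) (S.rev h.h1) (S.s h.h2) (S.r hw)).elim
  · subst e; exact Or.inr hw
  · subst e
    exact (S.no3 (a := b) (S.s h.h1) hw (S.rev h.h5)).elim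
  · subst e; exact Or.inl hw

theorem C5.noq {a q b c d e f : ℕ} (h : C5 T V a q b c d e f) (S : Surf T V) {x y : ℕ}
    (h1 : T e b x) (h2 : T e c y) : ∀ z, ¬ T e q z := by
  obtain ⟨v, hv, hve, hn⟩ := S.nofull e (S.mem h1)
  rcases h.hV v hv with e' | e' | e' | e' | e' | e' | e'
  · subst e'; exact absurd (S.s h.h4) (hn _)
  · subst e'; exact absurd h1 (hn _)
  · subst e'; exact absurd h2 (hn _)
  · subst e'; exact absurd (S.rev h.h3) (hn _)
  · exact absurd e' hve
  · subst e'; exact absurd (S.r h.h4) (hn _)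
  · subst e'; exact hn

theorem C5.nochord {a q b c d e f : ℕ} (h : C5 T V a q b c d e f) (S : Surf T V)
    (h1 : T b c e) : False := by
  have q3 : ∀ z, ¬ T e q z := h.noq S (S.rr h1) (S.rev h1)
  have h2 : T d e b := by
    rcases h.rot.rot.third S with h2 | h2
    · exact absurd (S.t (S.s h2)) (q3 _)
    · exact h2
  have h3 : T e f c := by
    rcases h.rot.rot.rot.third S with h2 | h2
    · exact absurd (S.t h2) (q3 _)
    · exact h2
  have q0 : ∀ z, ¬ T b q z := h.rot.rot.noq S (S.rr h2) (S.rev h2)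
  have q1 : ∀ z, ¬ T c q z := h.rot.rot.rot.noq S (S.rr h3) (S.rev h3)
  have hy : ∀ y z, T q y z → y = d ∨ y = f := by
    intro y z hyz
    rcases h.hV y (S.mem (S.s hyz)) with e' | e' | e' | e' | e' | e' | e'
    · subst e'; exact absurd (S.s hyz) (h.hq _)
    · subst e'; exact absurd (S.s hyz) (q0 _)
    · subst e'; exact absurd (S.s hyz) (q1 _)
    · exact Or.inl e'
    · subst e'; exact absurd (S.s hyz) (q3 _)
    · exact Or.inr e'
    · exact absurd e'.symm (S.ne hyz)
  obtain ⟨y, z, hyz⟩ := S.ex q h.qV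
  obtain ⟨w, hwz, hyw, -⟩ := S.two hyz
  have e1 := hy y z hyz
  have e2 := hy z y (S.t hyz)
  have e3 := hy w y (S.t hyw)
  have n1 := S.ne2 hyz
  have n2 := S.ne2 hyw
  omega

/-- the octahedron -/
structure Oct (T : ℕ → ℕ → ℕ → Prop) (V : Finset ℕ) (p q a b c d : ℕ) : Prop where
  hp : C4 T p a b c d
  hq : C4 T q a b c d
  npq : ∀ z, ¬ T p q z
  nac : ∀ z, ¬ T a c z
  nbd : ∀ z, ¬ T b d z
  pq : p ≠ q
  hV : ∀ v ∈ V, v = p ∨ v = q ∨ v = a ∨ v = b ∨ v = c ∨ v = d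

/-- the pentagonal bipyramid -/
structure Pent (T : ℕ → ℕ → ℕ → Prop) (V : Finset ℕ) (p q a b c d f : ℕ) : Prop where
  hp : C5 T V p q a b c d f
  h1 : T q a b
  h2 : T q b c
  h3 : T q c d
  h4 : T q d f
  h5 : T q f a
  nac : ∀ z, ¬ T a c z
  nbd : ∀ z, ¬ T b d z
  ncf : ∀ z, ¬ T c f z
  nda : ∀ z, ¬ T d a z
  nfb : ∀ z, ¬ T f b z

theorem C5.pent {a q b c d e f : ℕ} (h : C5 T V a q b c d e f) (S : Surf T V) :
    Pent T V a q b c d e f := by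
  have key : ∀ {b c d e f}, C5 T V a q b c d e f → T q b c := by
    intro b c d e f h
    rcases h.third S with h1 | h1
    · exact S.rr h1
    · exact (h.nochord S h1).elim
  have key2 : ∀ {b c d e f}, C5 T V a q b c d e f → ∀ z, ¬ T b d z := by
    intro b c d e f h z hz
    have c4 : C4 T b c a f q := by
      refine ⟨S.r h.h1, ?_, ?_, ?_, h.n5.symm, h.qa.symm⟩
      · exact S.rr h.h5
      · exact S.rev (key h.rot.rot.rot.rot)
      · exact S.s (key h)
    rcases c4.nbr S hz with e' | e' | e' | e'
    · exact S.ne2 h.h2 e'.symm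
    · exact S.ne3 h.h2 e'.symm
    · exact h.n3 e'
    · exact h.qd e'.symm
  exact ⟨h, key h, key h.rot, key h.rot.rot, key h.rot.rot.rot, key h.rot.rot.rot.rot,
    key2 h, key2 h.rot, key2 h.rot.rot, key2 h.rot.rot.rot, key2 h.rot.rot.rot.rot⟩

theorem C4.rot {a b c d e : ℕ} (h : C4 T a b c d e) : C4 T a c d e b :=
  ⟨h.h2, h.h3, h.h4, h.h1, h.n2, h.n1.symm⟩

/-- the opposite vertex in a 4-cycle link -/
theorem C4.opp {b u v w x : ℕ} (h : C4 T b u v w x) (S : Surf T V) {p c e : ℕ}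
    (h1 : T b p c) (h2 : T b p e) (hce : c ≠ e) : ∃ y, y ≠ p ∧ C4 T b p c y e := by
  have hp := h.nbr S h1
  have aux : ∀ {v w x}, C4 T b p v w x → ∃ y, y ≠ p ∧ C4 T b p c y e := by
    intro v w x h
    rcases S.uniq h.h1 (S.t h.h4) h.n2 h1 with e1 | e1 <;>
      rcases S.uniq h.h1 (S.t h.h4) h.n2 h2 with e2 | e2
    · exact absurd (e1.trans e2.symm) hce
    · subst e1 e2; exact ⟨w, h.n1.symm, h⟩
    · subst e1 e2
      exact ⟨w, h.n1.symm, S.t h.h4, S.t h.h3, S.t h.h2, S.t h.h1, h.n1, h.n2.symm⟩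
    · exact absurd (e1.trans e2.symm) hce
  rcases hp with e | e | e | e
  · subst e; exact aux h
  · subst e; exact aux h.rot
  · subst e; exact aux h.rot.rot
  · subst e; exact aux h.rot.rot.rot

theorem oct (S : Surf T V) (h4 : ∀ a ∈ V, ∃ b c d e, C4 T a b c d e) {p : ℕ} (hp : p ∈ V) :
    ∃ q a b c d, Oct T V p q a b c d := by
  obtain ⟨a, b, c, d, h⟩ := h4 p hp
  have key : ∀ {a b c d}, C4 T p a b c d → ∃ y, y ≠ p ∧ C4 T a p b y d := by
    intro a b c d h
    obtain ⟨u, v, w, x, h'⟩ := h4 a (S.mem (S.s h.h1))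
    exact h'.opp S (S.s h.h1) (S.rr h.h4) h.n2
  obtain ⟨y0, m0, k0⟩ := key h
  obtain ⟨y1, m1, k1⟩ := key h.rot
  obtain ⟨y2, m2, k2⟩ := key h.rot.rot
  obtain ⟨y3, m3, k3⟩ := key h.rot.rot.rot
  have key2 : ∀ {a b y y'}, T p a b → y ≠ p → y' ≠ p → T a b y → T b a y' → y' = y := by
    intro a b y y' h1 h2 h3 h4 h5
    rcases S.uniq (S.r h1) h4 h2.symm (S.s h5) with e | e
    · exact absurd e h3
    · exact e
  have e1 : y1 = y0 := key2 h.h1 m0 m1 k0.h2 (S.t k1.h3)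
  have e2 : y2 = y1 := key2 h.h2 m1 m2 k1.h2 (S.t k2.h3)
  have e3 : y3 = y2 := key2 h.h3 m2 m3 k2.h2 (S.t k3.h3)
  subst e3 e2 e1
  have hq : C4 T y3 a b c d :=
    ⟨S.rr k0.h2, S.rr k1.h2, S.rr k2.h2, S.rr k3.h2, h.n1, h.n2⟩
  refine ⟨y3, a, b, c, d, h, hq, ?_, ?_, ?_, m0.symm, ?_⟩
  · intro z hz
    rcases h.nbr S hz with e | e | e | e
    · exact S.ne hq.h1 e
    · exact S.ne hq.h2 e
    · exact S.ne hq.h3 e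
    · exact S.ne hq.h4 e
  · intro z hz
    rcases k0.nbr S hz with e | e | e | e
    · exact S.ne h.h3 e.symm
    · exact S.ne2 h.h2 e.symm
    · exact S.ne hq.h3 e.symm
    · exact S.ne2 h.h3 e
  · intro z hz
    rcases k1.nbr S hz with e | e | e | e
    · exact S.ne h.h4 e.symm
    · exact S.ne2 h.h3 e.symm
    · exact S.ne hq.h4 e.symm
    · exact S.ne2 h.h4 e
  · refine S.conn (fun v => v = p ∨ v = y3 ∨ v = a ∨ v = b ∨ v = c ∨ v = d) ⟨p, hp, Or.inl rfl⟩ ?_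
    rintro x y z hx hz
    rcases hx with rfl | rfl | rfl | rfl | rfl | rfl
    · have := h.nbr S hz; tauto
    · have := hq.nbr S hz; tauto
    · have := k0.nbr S hz; tauto
    · have := k1.nbr S hz; tauto
    · have := k2.nbr S hz; tauto
    · have := k3.nbr S hz; tauto

theorem main (S : Surf T V) (hV : V.Nonempty) :
    (∃ p q a b c d, Oct T V p q a b c d) ∨ ∃ p q a b c d f, Pent T V p q a b c d f := by
  by_cases h : ∃ p ∈ V, ∃ q b c d e f, C5 T V p q b c d e f
  · obtain ⟨p, -, q, b, c, d, e, f, h⟩ := h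
    exact Or.inr ⟨p, q, b, c, d, e, f, h.pent S⟩
  · left
    obtain ⟨p, hp⟩ := hV
    obtain ⟨q, a, b, c, d, h⟩ := S.oct (fun a ha => (S.cyc ha).resolve_right
      fun hh => h ⟨a, ha, hh⟩) hp
    exact ⟨p, q, a, b, c, d, h⟩

end Surf


/-- triangles of the link of `t` -/
def Tri (K : SComplex) (t x y z : ℕ) : Prop :=
  t ≠ x ∧ t ≠ y ∧ t ≠ z ∧ x ≠ y ∧ y ≠ z ∧ x ≠ z ∧ ({t, x, y, z} : Finset ℕ) ∈ K.faces

theorem Tri.r {K : SComplex} {t x y z : ℕ} (h : Tri K t x y z) : Tri K t y z x := by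
  obtain ⟨a, b, c, d, e, f, g⟩ := h
  refine ⟨b, c, a, e, f.symm, d.symm, ?_⟩
  have : ({t, y, z, x} : Finset ℕ) = {t, x, y, z} := by ext v; simp; tauto
  rw [this]; exact g

theorem Tri.s {K : SComplex} {t x y z : ℕ} (h : Tri K t x y z) : Tri K t y x z := by
  obtain ⟨a, b, c, d, e, f, g⟩ := h
  refine ⟨b, a, c, d.symm, f, e, ?_⟩
  have : ({t, y, x, z} : Finset ℕ) = {t, x, y, z} := by ext v; simp; tauto
  rw [this]; exact g

theorem Tri.t {K : SComplex} {t x y z : ℕ} (h : Tri K t x y z) : Tri K t x z y := h.s.r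

theorem Tri.lk_mem {K : SComplex} {t x y z : ℕ} (h : Tri K t x y z) :
    {x, y, z} ∈ (K.lk {t}).faces := by
  obtain ⟨a, b, c, d, e, f, g⟩ := h
  rw [mem_lk]
  refine ⟨by simp, by simp [a, b, c], ?_⟩
  have : ({x, y, z} : Finset ℕ) ∪ {t} = {t, x, y, z} := by ext v; simp; tauto
  rw [this]; exact g

theorem Tri.lv {K : SComplex} {t x y z : ℕ} (h : Tri K t x y z) : K.LV {t} x := by
  obtain ⟨a, b, c, d, e, f, g⟩ := h
  exact ⟨by simpa using a.symm, down g (by intro v; simp; tauto) (by simp)⟩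

theorem Tri.lv2 {K : SComplex} {t x y z : ℕ} (h : Tri K t x y z) : K.LV {t, x} y := by
  obtain ⟨a, b, c, d, e, f, g⟩ := h
  exact ⟨by simp [b.symm, d.symm], down g (by intro v; simp; tauto) (by simp)⟩

theorem lv3_iff {K : SComplex} {t x y u : ℕ} (a : t ≠ x) (b : t ≠ y) (c : x ≠ y) :
    K.LV {t, x, y} u ↔ Tri K t x y u := by
  have : (insert u {t, x, y} : Finset ℕ) = {t, x, y, u} := by ext v; simp; tauto
  rw [LV, this]
  constructor
  · rintro ⟨h1, h2⟩
    simp only [Finset.mem_insert, Finset.mem_singleton, not_or] at h1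
    exact ⟨a, b, Ne.symm h1.1, c, Ne.symm h1.2.2, Ne.symm h1.2.1, h2⟩
  · rintro ⟨_, _, h1, _, h2, h3, h4⟩
    exact ⟨by simp [h1.symm, h2.symm, h3.symm], h4⟩

theorem NP.ext3 {K : SComplex} (hK : NP K) {t x y : ℕ} (a : t ≠ x) (b : t ≠ y) (c : x ≠ y)
    (h : ({t, x, y} : Finset ℕ) ∈ K.faces) : ∃ z, Tri K t x y z := by
  obtain ⟨u, v, -, huv⟩ := hK.two _ h (by rw [Finset.card_eq_three]; exact ⟨t, x, y, a, b, c, rfl⟩)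
  exact ⟨u, (lv3_iff a b c).1 ((huv u).2 (Or.inl rfl))⟩

theorem NP.ext2 {K : SComplex} (hK : NP K) {t x : ℕ} (a : t ≠ x)
    (h : ({t, x} : Finset ℕ) ∈ K.faces) : ∃ y z, Tri K t x y z := by
  obtain ⟨F, hF, hsub, h4⟩ := hK.ext _ h
  have : ({t, x} : Finset ℕ).card < F.card := by
    rw [h4]; exact Finset.card_le_two.trans_lt (by norm_num)
  obtain ⟨y, hyF, hy⟩ := Finset.exists_mem_notMem_of_card_lt_card this
  simp only [Finset.mem_insert, Finset.mem_singleton, not_or] at hy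
  obtain ⟨z, hz⟩ := hK.ext3 a (Ne.symm hy.1) (Ne.symm hy.2) (down hF (by
    intro v hv
    simp only [Finset.mem_insert, Finset.mem_singleton] at hv
    rcases hv with rfl | rfl | rfl
    · exact hsub (by simp)
    · exact hsub (by simp)
    · exact hyF) (by simp))
  exact ⟨y, z, hz⟩

theorem NP.triTwo {K : SComplex} (hK : NP K) {t x y z : ℕ} (h : Tri K t x y z) :
    ∃ w, w ≠ z ∧ Tri K t x y w ∧ ∀ u, Tri K t x y u → u = z ∨ u = w := by
  obtain ⟨a, b, c, d, e, f, g⟩ := id h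
  obtain ⟨u, v, huv, hh⟩ := hK.two {t, x, y} (down g (by intro v; simp; tauto) (by simp))
    (by rw [Finset.card_eq_three]; exact ⟨t, x, y, a, b, d, rfl⟩)
  simp only [lv3_iff a b d] at hh
  rcases (hh z).1 h with rfl | rfl
  · exact ⟨v, huv.symm, (hh v).2 (Or.inr rfl), fun w hw => (hh w).1 hw⟩
  · exact ⟨u, huv, (hh u).2 (Or.inl rfl), fun w hw => ((hh w).1 hw).symm⟩

theorem NP.triLkc {K : SComplex} (hK : NP K) {t a : ℕ} (C : ℕ → Prop)
    (h0 : ∃ c z, C c ∧ Tri K t a c z) (hC : ∀ c z, C c → Tri K t a c z → C z)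
    (c : ℕ) (hc : K.LV {t, a} c) : C c := by
  obtain ⟨c0, z0, hc0, hT⟩ := h0
  have hta : ({t, a} : Finset ℕ) ∈ K.faces :=
    down hc.2 (Finset.subset_insert _ _) (by simp)
  have := hK.conn {t, a} Finset.card_le_two (Or.inr hta) c0 c hT.lv2 hc
  clear hc
  induction this with
  | refl => exact hc0
  | tail _ h2 ih =>
    rename_i y z _
    by_cases hyz : y = z
    · subst hyz; exact ih
    · obtain ⟨h3, h4, h5⟩ := h2
      simp only [Finset.mem_insert, Finset.mem_singleton, not_or] at h3 h4
      refine hC y z ih ⟨hT.1, Ne.symm h3.1, Ne.symm h4.1, Ne.symm h3.2, hyz, Ne.symm h4.2, ?_⟩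
      have : ({t, a, y, z} : Finset ℕ) = insert y (insert z {t, a}) := by ext v; simp; tauto
      rw [this]; exact h5

theorem NP.triConn {K : SComplex} (hK : NP K) {t : ℕ} (C : ℕ → Prop)
    (h0 : ∃ c, K.LV {t} c ∧ C c) (hC : ∀ c y z, C c → Tri K t c y z → C y)
    (c : ℕ) (hc : K.LV {t} c) : C c := by
  obtain ⟨c0, hT, hc0⟩ := h0
  have ht : ({t} : Finset ℕ) ∈ K.faces :=
    down hc.2 (Finset.subset_insert _ _) (by simp)
  have := hK.conn {t} (by simp) (Or.inr ht) c0 c hT hc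
  clear hc
  induction this with
  | refl => exact hc0
  | tail _ h2 ih =>
    rename_i y z _
    by_cases hyz : y = z
    · subst hyz; exact ih
    · obtain ⟨h3, h4, h5⟩ := h2
      simp only [Finset.mem_singleton] at h3 h4
      have : ({t, y, z} : Finset ℕ) = insert y (insert z {t}) := by ext v; simp; tauto
      rw [← this] at h5
      obtain ⟨w, hw⟩ := hK.ext3 (Ne.symm h3) (Ne.symm h4) hyz h5
      exact hC y z w ih hw

theorem card_four {x y z w : ℕ} (h1 : x ≠ y) (h2 : x ≠ z) (h3 : x ≠ w) (h4 : y ≠ z) (h5 : y ≠ w)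
    (h6 : z ≠ w) : ({x, y, z, w} : Finset ℕ).card = 4 := by
  rw [Finset.card_insert_of_notMem, Finset.card_insert_of_notMem, Finset.card_pair h6]
  · simp [h4, h5]
  · simp [h1, h2, h3]

theorem fill {K : SComplex} (hK : InClassR K) {x y z w : ℕ} (h1 : x ≠ y) (h2 : x ≠ z) (h3 : x ≠ w)
    (h4 : y ≠ z) (h5 : y ≠ w) (h6 : z ≠ w) (k1 : ({y, z, w} : Finset ℕ) ∈ K.faces)
    (k2 : ({x, z, w} : Finset ℕ) ∈ K.faces) (k3 : ({x, y, w} : Finset ℕ) ∈ K.faces)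
    (k4 : ({x, y, z} : Finset ℕ) ∈ K.faces) : ({x, y, z, w} : Finset ℕ) ∈ K.faces := by
  refine hK.2.2.2.1 _ (card_four h1 h2 h3 h4 h5 h6) fun s hs => ?_
  simp only [properFaces, Finset.mem_filter, Finset.mem_powerset] at hs
  obtain ⟨hs, hne, hne'⟩ := hs
  have hne := Finset.nonempty_iff_ne_empty.2 hne
  obtain ⟨v, hv, hvs⟩ := Finset.exists_of_ssubset (Finset.ssubset_iff_subset_ne.2 ⟨hs, hne'⟩)
  have hs' : ∀ u ∈ s, u ≠ v ∧ (u = x ∨ u = y ∨ u = z ∨ u = w) := by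
    intro u hu
    refine ⟨by rintro rfl; exact hvs hu, ?_⟩
    simpa using hs hu
  simp only [Finset.mem_insert, Finset.mem_singleton] at hv
  rcases hv with rfl | rfl | rfl | rfl
  · exact down k1 (by intro u hu; have := hs' u hu; simp; tauto) hne
  · exact down k2 (by intro u hu; have := hs' u hu; simp; tauto) hne
  · exact down k3 (by intro u hu; have := hs' u hu; simp; tauto) hne
  · exact down k4 (by intro u hu; have := hs' u hu; simp; tauto) hne

theorem lk_vertex {K : SComplex} {t : ℕ} {s : Finset ℕ} (hs : s ∈ (K.lk {t}).faces) {v : ℕ}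
    (hv : v ∈ s) : K.LV {t} v := by
  rw [mem_lk] at hs
  refine ⟨fun h => Finset.disjoint_left.1 hs.2.1 hv h, down hs.2.2 ?_ (by simp)⟩
  intro u hu
  rcases Finset.mem_insert.1 hu with rfl | hu
  · exact Finset.mem_union_left _ hv
  · exact Finset.mem_union_right _ hu

theorem lk_edge {K : SComplex} (hK : NP K) {t : ℕ} {s : Finset ℕ} (hs : s ∈ (K.lk {t}).faces)
    {u v : ℕ} (huv : u ≠ v) (hu : u ∈ s) (hv : v ∈ s) : ∃ z, Tri K t u v z := by
  have h1 := (lk_vertex hs hu).1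
  have h2 := (lk_vertex hs hv).1
  rw [mem_lk] at hs
  simp only [Finset.mem_singleton] at h1 h2
  refine hK.ext3 (Ne.symm h1) (Ne.symm h2) huv (down hs.2.2 ?_ (by simp))
  intro x hx
  simp only [Finset.mem_insert, Finset.mem_singleton] at hx
  rcases hx with rfl | rfl | rfl
  · simp
  · exact Finset.mem_union_left _ hu
  · exact Finset.mem_union_left _ hv

theorem tri3_nbr {K : SComplex} (hK : NP K) {t a b c d : ℕ} (h1 : Tri K t a b c)
    (h2 : Tri K t a c d) (h3 : Tri K t a d b) :
    ∀ v, K.LV {t, a} v → v = b ∨ v = c ∨ v = d := by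
  refine hK.triLkc _ ⟨b, c, Or.inl rfl, h1⟩ ?_
  have key : ∀ {b c d z}, Tri K t a b c → Tri K t a d b → c ≠ d → Tri K t a b z →
      z = c ∨ z = d := by
    intro b c d z h1 h3 hcd hz
    obtain ⟨w, hw, -, hu⟩ := hK.triTwo h1
    rcases hu d h3.t with e | e
    · exact absurd e.symm hcd
    · subst e; exact hu z hz
  have hcd : c ≠ d := h2.2.2.2.2.1
  have hdb : d ≠ b := h3.2.2.2.2.1
  have hbc : b ≠ c := h1.2.2.2.2.1
  rintro x z (rfl | rfl | rfl) hz
  · have := key h1 h3 hcd hz; tauto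
  · have := key h2 h1 hdb hz; tauto
  · have := key h3 h2 hbc hz; tauto

theorem no3 {K : SComplex} (hR : InClassR K) {t : ℕ} (ht : K.IsSingular t)
    {a b c d : ℕ} (h1 : Tri K t a b c) (h2 : Tri K t a c d) (h3 : Tri K t a d b) : False := by
  have hK : NP K := hR.1.np
  have nb := tri3_nbr hK h1 h2 h3
  obtain ⟨ta, tb, tc, ab, bc, ac, F1⟩ := id h1
  obtain ⟨-, -, td, -, cd, ad, F2⟩ := id h2
  obtain ⟨-, -, -, -, db, -, F3⟩ := id h3
  have hbcd : ({b, c, d} : Finset ℕ) ∈ K.faces := by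
    refine bistellar_contra (u := t) (v := a) hR ta
      (down F1 (by intro v; simp; tauto) (by simp))
      (by rw [Finset.card_eq_three]; exact ⟨b, c, d, bc, db.symm, cd, rfl⟩)
      (by simp [tb, tc, td]) (by simp [ab, ac, ad]) ?_
    ext γ
    rw [mem_lk]
    simp only [properFaces, Finset.mem_filter, Finset.mem_powerset]
    constructor
    · rintro ⟨g1, g2, g3⟩
      refine ⟨?_, g1.ne_empty, ?_⟩
      · intro v hv
        have : K.LV {t, a} v := by
          refine ⟨fun h => Finset.disjoint_left.1 g2 hv h, down g3 ?_ (by simp)⟩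
          intro u hu
          rcases Finset.mem_insert.1 hu with rfl | hu
          · exact Finset.mem_union_left _ hv
          · exact Finset.mem_union_right _ hu
        simpa using nb v this
      · rintro rfl
        have e := hK.card _ g3
        have e2 : ({b, c, d} : Finset ℕ).card = 3 := by
          rw [Finset.card_eq_three]; exact ⟨b, c, d, bc, db.symm, cd, rfl⟩
        rw [Finset.card_union_of_disjoint g2, Finset.card_pair ta, e2] at e
        omega
    · rintro ⟨g1, g2, g3⟩
      have g2 := Finset.nonempty_iff_ne_empty.2 g2
      obtain ⟨v, hv, hvs⟩ := Finset.exists_of_ssubset (Finset.ssubset_iff_subset_ne.2 ⟨g1, g3⟩)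
      have hs' : ∀ u ∈ γ, u ≠ v ∧ (u = b ∨ u = c ∨ u = d) := by
        intro u hu
        refine ⟨by rintro rfl; exact hvs hu, ?_⟩
        simpa using g1 hu
      refine ⟨g2, ?_, ?_⟩
      · rw [Finset.disjoint_left]
        intro u hu h
        have := (hs' u hu).2
        simp only [Finset.mem_insert, Finset.mem_singleton] at h
        rcases h with rfl | rfl <;> tauto
      · simp only [Finset.mem_insert, Finset.mem_singleton] at hv
        have hne : (γ ∪ {t, a}).Nonempty := g2.mono Finset.subset_union_left
        rcases hv with rfl | rfl | rfl
        · refine down F2 ?_ hne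
          intro u hu
          rcases Finset.mem_union.1 hu with hu | hu
          · have := hs' u hu; simp; tauto
          · simp only [Finset.mem_insert, Finset.mem_singleton] at hu ⊢; tauto
        · refine down F3 ?_ hne
          intro u hu
          rcases Finset.mem_union.1 hu with hu | hu
          · have := hs' u hu; simp; tauto
          · simp only [Finset.mem_insert, Finset.mem_singleton] at hu ⊢; tauto
        · refine down F1 ?_ hne
          intro u hu
          rcases Finset.mem_union.1 hu with hu | hu
          · have := hs' u hu; simp; tauto
          · simp only [Finset.mem_insert, Finset.mem_singleton] at hu ⊢; tauto
  have F4 : Tri K t b c d := ⟨tb, tc, td, bc, cd, db.symm, by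
    refine fill hR tb tc td bc db.symm cd hbcd ?_ ?_ ?_
    · exact down F2 (by intro v; simp; tauto) (by simp)
    · exact down F3 (by intro v; simp; tauto) (by simp)
    · exact down F1 (by intro v; simp; tauto) (by simp)⟩
  apply ht.2
  have hV : ∀ v, K.LV {t} v → v = a ∨ v = b ∨ v = c ∨ v = d := by
    refine hK.triConn _ ⟨a, h1.lv, Or.inl rfl⟩ ?_
    rintro x y z (rfl | rfl | rfl | rfl) hx
    · have := nb y hx.lv2; tauto
    · have := tri3_nbr hK h1.s F4 h3.r.r.t y hx.lv2
      tauto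
    · have := tri3_nbr hK h1.r.r F4.s h2.r y hx.lv2
      tauto
    · have := tri3_nbr hK h3.s F4.r.r h2.r.r.t y hx.lv2
      tauto
  refine tetra_sphere _ a b c d ab ac ad bc db.symm cd ?_ ?_ F4.lk_mem h2.lk_mem h3.t.lk_mem
    h1.lk_mem
  · intro s hs
    by_contra hcon
    simp only [not_or, not_not] at hcon
    rw [mem_lk] at hs
    have hsub : insert t ({a, b, c, d} : Finset ℕ) ⊆ s ∪ {t} := by
      intro v hv
      simp only [Finset.mem_insert, Finset.mem_singleton] at hv
      rcases hv with rfl | rfl | rfl | rfl | rfl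
      · simp
      all_goals exact Finset.mem_union_left _ (by tauto)
    have e1 := Finset.card_le_card hsub
    have e2 := hK.card _ hs.2.2
    rw [Finset.card_insert_of_notMem (by simp [ta, tb, tc, td]),
      card_four ab ac ad bc db.symm cd] at e1
    omega
  · intro s hs v hv
    simpa using hV v (lk_vertex hs hv)


theorem full_pair {K : SComplex} (hR : InClassR K) {t a b c : ℕ} (ha : t ≠ a)
    (hf : ∀ b, K.LV {t} b → b ≠ a → ∃ z, Tri K t a b z)
    (htb : t ≠ b) (htc : t ≠ c) (hab : a ≠ b) (hac : a ≠ c) (hbc : b ≠ c)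
    (h1 : ({t, b, c} : Finset ℕ) ∈ K.faces) (h2 : ({a, b, c} : Finset ℕ) ∈ K.faces) :
    Tri K t a b c := by
  refine ⟨ha, htb, htc, hab, hbc, hac, ?_⟩
  obtain ⟨z, hz⟩ := hf b ⟨by simpa using htb.symm, down h1 (by intro v; simp; tauto) (by simp)⟩
    hab.symm
  obtain ⟨w, hw⟩ := hf c ⟨by simpa using htc.symm, down h1 (by intro v; simp; tauto) (by simp)⟩
    hac.symm
  refine fill hR ha htb htc hab hac hbc h2 h1 ?_ ?_
  · exact down hw.2.2.2.2.2.2 (by intro v; simp; tauto) (by simp)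
  · exact down hz.2.2.2.2.2.2 (by intro v; simp; tauto) (by simp)

theorem full_lc {K : SComplex} (hR : InClassR K) {t a : ℕ} (ht : K.IsSingular t) (ha : t ≠ a)
    (hf : ∀ b, K.LV {t} b → b ≠ a → ∃ z, Tri K t a b z) : LC K t a := by
  intro s hs hts has h1 h2
  have hc := hR.1.np.card _ h1
  rw [Finset.card_insert_of_notMem hts] at hc
  have hpos := Finset.card_pos.2 hs
  have : s.card = 1 ∨ s.card = 2 ∨ s.card = 3 := by omega
  rcases this with h | h | h
  · obtain ⟨b, rfl⟩ := Finset.card_eq_one.1 h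
    simp only [Finset.mem_singleton] at hts has
    obtain ⟨z, hz⟩ := hf b ⟨by simpa using Ne.symm hts, by rw [Finset.pair_comm]; exact h1⟩
      (Ne.symm has)
    exact down hz.2.2.2.2.2.2 (by intro v; simp; tauto) (by simp)
  · obtain ⟨b, c, hbc, rfl⟩ := Finset.card_eq_two.1 h
    simp only [Finset.mem_insert, Finset.mem_singleton, not_or] at hts has
    exact (full_pair hR ha hf hts.1 hts.2 has.1 has.2 hbc h1 h2).2.2.2.2.2.2
  · obtain ⟨b, c, d, hbc, hbd, hcd, rfl⟩ := Finset.card_eq_three.1 h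
    simp only [Finset.mem_insert, Finset.mem_singleton, not_or] at hts has
    obtain ⟨tb, tc, td⟩ := hts
    obtain ⟨ab, ac, ad⟩ := has
    have k1 := full_pair hR ha hf tb tc ab ac hbc
      (down h1 (by intro v; simp; tauto) (by simp)) (down h2 (by intro v; simp; tauto) (by simp))
    have k2 := full_pair hR ha hf tc td ac ad hcd
      (down h1 (by intro v; simp; tauto) (by simp)) (down h2 (by intro v; simp; tauto) (by simp))
    have k3 := full_pair hR ha hf td tb ad ab hbd.symm
      (down h1 (by intro v; simp; tauto) (by simp)) (down h2 (by intro v; simp; tauto) (by simp))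
    exact (no3 hR ht k1 k2 k3).elim

theorem edge_deg {K : SComplex} (hR : InClassR K) {t a : ℕ} (ht : K.IsSingular t) (ha : t ≠ a)
    (he : ({t, a} : Finset ℕ) ∈ K.faces) : 4 ≤ K.deg {t, a} := by
  have hK := hR.1.np
  obtain ⟨b, c, h1⟩ := hK.ext2 ha he
  obtain ⟨d, hdc, h2, -⟩ := hK.triTwo h1
  obtain ⟨e, heb, h3, -⟩ := hK.triTwo h1.t
  have hed : e ≠ d := by
    rintro rfl
    exact no3 hR ht h1 h3 h2.t
  rw [deg_eq, ← card_four (h1.2.2.2.2.1) (h2.2.2.2.2.1) heb.symm hdc.symm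
    (h3.2.2.2.2.1) hed.symm]
  refine Finset.card_le_card ?_
  intro v hv
  rw [mem_nb]
  simp only [Finset.mem_insert, Finset.mem_singleton] at hv
  rcases hv with rfl | rfl | rfl | rfl
  · exact h1.lv2
  · exact h1.t.lv2
  · exact h2.t.lv2
  · exact h3.t.lv2

theorem nofull {K : SComplex} (hR : InClassR K) {t a : ℕ} (ht : K.IsSingular t)
    (ha : K.LV {t} a) : ∃ b, K.LV {t} b ∧ b ≠ a ∧ ∀ z, ¬ Tri K t a b z := by
  by_contra hcon
  push Not at hcon
  have hta : t ≠ a := fun h => ha.1 (by simp [h])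
  have he : ({t, a} : Finset ℕ) ∈ K.faces := by rw [Finset.pair_comm]; exact ha.2
  exact contraction_contra hR hta he (full_lc hR ht hta hcon) (edge_deg hR ht hta he)

theorem surf_of {K : SComplex} (hR : InClassR K) {t : ℕ} (ht : K.IsSingular t)
    (hd : K.deg {t} ≤ 7) : Surf (Tri K t) (K.nb {t}) where
  r := Tri.r
  s := Tri.s
  ne := fun h => h.2.2.2.1
  mem := fun h => mem_nb.2 h.lv
  ex := fun x hx => by
    rw [mem_nb] at hx
    exact hR.1.np.ext2 (fun h => hx.1 (by simp [h])) (by rw [Finset.pair_comm]; exact hx.2)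
  two := hR.1.np.triTwo
  lkc := fun a C h0 hC c z hc => hR.1.np.triLkc C h0 hC c hc.lv2
  conn := fun C h0 hC c hc => by
    obtain ⟨x, hx, hx'⟩ := h0
    exact hR.1.np.triConn C ⟨x, mem_nb.1 hx, hx'⟩ hC c (mem_nb.1 hc)
  no3 := no3 hR ht
  nofull := fun a ha => by
    obtain ⟨b, hb, h⟩ := nofull hR ht (mem_nb.1 ha)
    exact ⟨b, mem_nb.2 hb, h⟩
  card := by rw [← deg_eq]; exact hd

theorem eight_le {K : SComplex} (hR : InClassR K) {t : ℕ} (ht : K.IsSingular t) :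
    8 ≤ K.deg {t} := by
  by_contra hd
  have S := surf_of hR ht (by omega)
  have hK := hR.1.np
  have hV : (K.nb {t}).Nonempty := by
    obtain ⟨F, hF, hsub, h4⟩ := hK.ext _ ht.1
    have : ({t} : Finset ℕ).card < F.card := by rw [h4]; simp
    obtain ⟨y, hyF, hy⟩ := Finset.exists_mem_notMem_of_card_lt_card this
    exact ⟨y, mem_nb.2 ⟨hy, down hF (Finset.insert_subset hyF hsub) (by simp)⟩⟩
  have hno : ∀ u v, u ≠ v → (∀ z, ¬ Tri K t u v z) → ∀ s ∈ (K.lk {t}).faces, u ∉ s ∨ v ∉ s := by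
    intro u v huv h s hs
    by_contra hcon
    simp only [not_or, not_not] at hcon
    obtain ⟨z, hz⟩ := lk_edge hK hs huv hcon.1 hcon.2
    exact h z hz
  apply ht.2
  rcases S.main hV with ⟨p, q, a, b, c, d, h⟩ | ⟨p, q, a, b, c, d, f, h⟩
  · refine octa_sphere _ p q a b c d h.pq (S.ne h.hp.h1) (S.ne h.hp.h2) (S.ne h.hp.h3)
      (S.ne h.hp.h4) (S.ne h.hq.h1) (S.ne h.hq.h2) (S.ne h.hq.h3)
      (S.ne h.hq.h4) (S.ne2 h.hp.h1) h.hp.n1 (S.ne2 h.hp.h4).symm (S.ne2 h.hp.h2) h.hp.n2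
      (S.ne2 h.hp.h3) (hno _ _ h.pq h.npq) (hno _ _ h.hp.n1 h.nac) (hno _ _ h.hp.n2 h.nbd) ?_
      h.hp.h1.lk_mem h.hp.h2.lk_mem h.hp.h3.lk_mem h.hp.h4.lk_mem
      h.hq.h1.lk_mem h.hq.h2.lk_mem h.hq.h3.lk_mem h.hq.h4.lk_mem
    intro s hs v hv
    have := h.hV v (mem_nb.2 (lk_vertex hs hv))
    simpa using this
  · refine penta_sphere _ p q a b c d f h.hp.qa.symm (S.ne h.hp.h1) (S.ne h.hp.h2) (S.ne h.hp.h3)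
      (S.ne h.hp.h4) (S.ne h.hp.h5) (S.ne h.h1) (S.ne h.h2) (S.ne h.h3)
      (S.ne h.h4) (S.ne h.h5) (S.ne2 h.hp.h1) h.hp.n1 h.hp.n4.symm (S.ne2 h.hp.h5).symm
      (S.ne2 h.hp.h2) h.hp.n2 h.hp.n5.symm
      (S.ne2 h.hp.h3) h.hp.n3 (S.ne2 h.hp.h4) (hno _ _ h.hp.qa.symm h.hp.hq)
      (hno _ _ h.hp.n1 h.nac) (hno _ _ h.hp.n2 h.nbd) (hno _ _ h.hp.n3 h.ncf)
      (hno _ _ h.hp.n4 h.nda) (hno _ _ h.hp.n5 h.nfb) ?_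
      h.hp.h1.lk_mem h.hp.h2.lk_mem h.hp.h3.lk_mem h.hp.h4.lk_mem h.hp.h5.lk_mem
      h.h1.lk_mem h.h2.lk_mem h.h3.lk_mem h.h4.lk_mem h.h5.lk_mem
    intro s hs v hv
    have := h.hp.hV v (mem_nb.2 (lk_vertex hs hv))
    simp only [Finset.mem_insert, Finset.mem_singleton]
    tauto

/-- Lemma 3.10: in the class `R` with exactly two singular vertices `t, t₁`:
if `d(t) = 7` then `tt₁` is an edge with `d(tt₁) = 6` and `d(t₁) ≥ 8`;
otherwise `d(t) ≥ 8` and `d(t₁) ≥ 8`. -/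
theorem statement9 (K : SComplex) (t t₁ : ℕ) (hK : InClassR K) (hne : t ≠ t₁)
    (hsing : {v | K.IsSingular v} = {t, t₁}) :
    (K.deg {t} = 7 →
      ({t, t₁} : Finset ℕ) ∈ K.faces ∧ K.deg {t, t₁} = 6 ∧ 8 ≤ K.deg {t₁}) ∧
    (K.deg {t} ≠ 7 → 8 ≤ K.deg {t} ∧ 8 ≤ K.deg {t₁}) := by
  have h1 : t ∈ {v | K.IsSingular v} := by rw [hsing]; simp
  have h2 : t₁ ∈ {v | K.IsSingular v} := by rw [hsing]; simp
  have e1 := eight_le hK h1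
  have e2 := eight_le hK h2
  exact ⟨fun h => by omega, fun _ => ⟨e1, e2⟩⟩

end SComplex
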